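/- arXiv:1412.5622 — 4 statements merged into one kernel-verified Lean document; each statement's English description precedes it below -/
import Mathlib

section
/- There exists a bounded permutation parameter f : 𝔖 → ℝ that is finitely approximable but not finitely forcible. -/
open Filter Topology

/-- The type of finite permutations of all orders: a permutation of order `n`
is a bijection of `Fin n` (representing `[n] = {1,…,n}`). -/
abbrev Perms : Type := Σ n : ℕ, Equiv.Perm (Fin n)

/-- A permutation `σ` of order `n` is indecomposable if there is no `m` with
`1 ≤ m < n` such that `σ` maps the first `m` elements onto the first `m` elements. -/
def Indecomposable {n : ℕ} (σ : Equiv.Perm (Fin n)) : Prop :=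
  ¬ ∃ m : ℕ, 1 ≤ m ∧ m < n ∧ ∀ i : Fin n, ((σ i : ℕ) < m ↔ (i : ℕ) < m)

/-- Indecomposability for a permutation of arbitrary order. -/
def Perms.Indec (σ : Perms) : Prop := Indecomposable σ.2

/-- `f` is an occurrence of `π` in `σ`: a strictly increasing map preserving
the relative order of values. -/
def IsOcc {k n : ℕ} (π : Equiv.Perm (Fin k)) (σ : Equiv.Perm (Fin n))
    (f : Fin k → Fin n) : Prop :=
  StrictMono f ∧ ∀ i j : Fin k, π i < π j ↔ σ (f i) < σ (f j)

/-- `Λ(π,σ)`: the number of occurrences of `π` in `σ`. -/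
noncomputable def lam {k n : ℕ} (π : Equiv.Perm (Fin k)) (σ : Equiv.Perm (Fin n)) : ℕ :=
  Nat.card {f : Fin k → Fin n // IsOcc π σ f}

/-- The (sub)permutation density `t(π,σ)`. -/
noncomputable def dens {k n : ℕ} (π : Equiv.Perm (Fin k)) (σ : Equiv.Perm (Fin n)) : ℝ :=
  if k ≤ n then (lam π σ : ℝ) / (n.choose k : ℝ) else 0

/-- The density `t(π,σ)` for permutations of arbitrary orders. -/
noncomputable def subDens (π σ : Perms) : ℝ := dens π.2 σ.2

/-- A permutation parameter `f : 𝔖 → ℝ` is finitely forcible if there is a finite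
family `A` of permutations such that for every `ε > 0` there are `n₀` and `δ > 0`
such that any two permutations of order at least `n₀` whose densities of members
of `A` differ by less than `δ` have `f`-values within `ε`. -/
def FinitelyForcible (f : Perms → ℝ) : Prop :=
  ∃ A : Finset Perms, ∀ ε : ℝ, 0 < ε → ∃ n₀ : ℕ, ∃ δ : ℝ, 0 < δ ∧
    ∀ σ π : Perms, n₀ ≤ σ.1 → n₀ ≤ π.1 →
      (∀ τ ∈ A, |subDens τ σ - subDens τ π| < δ) → |f σ - f π| < ε

/-- A permutation parameter `f : 𝔖 → ℝ` is finitely approximable if for every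
`ε > 0` there are `δ > 0`, `n₀` and a finite family `A` of permutations such that
any two permutations of order at least `n₀` whose densities of members of `A`
differ by less than `δ` have `f`-values within `ε`. -/
def FinitelyApproximable (f : Perms → ℝ) : Prop :=
  ∀ ε : ℝ, 0 < ε → ∃ δ : ℝ, 0 < δ ∧ ∃ n₀ : ℕ, ∃ A : Finset Perms,
    ∀ σ π : Perms, n₀ ≤ σ.1 → n₀ ≤ π.1 →
      (∀ τ ∈ A, |subDens τ σ - subDens τ π| < δ) → |f σ - f π| < ε

/-!
The parameter is `∑ₖ 2⁻ᵏ t(τₖ, σ)` with `τₖ = 2 1 3 … (k + 2)`. A series of densities with summable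
weights is determined by its first terms up to a small error, hence is bounded and finitely
approximable. To see that this one is not finitely forcible, apply the Thue–Morse substitution
`(σ, π) ↦ (σ ⊕ π, π ⊕ σ)` repeatedly, starting with a decreasing and an increasing permutation of
the same order. Each step balances the counts of patterns of one more order, so after `k` steps all
densities of order at most `k + 1` agree. Nevertheless `t(τₖ, ·)` differs by an amount depending
only on `k`, because in a direct sum `τₖ₊₁` can be split into `τₖ` in the first block and its last
point in the second. Each of the other `t(τᵢ, ·)` differs in the same direction or not at all, so
this difference survives in the series.
-/

open Equiv (Perm swap)

section DirectSum

variable {a b m l : ℕ}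

/-- The direct sum `σ ⊕ π`: `σ` acts on the first `a` points, `π` on the last `b`. -/
def directSum (σ : Perm (Fin a)) (π : Perm (Fin b)) : Perm (Fin (a + b)) :=
  finSumFinEquiv.permCongr (Equiv.Perm.sumCongr σ π)

@[simp]
lemma directSum_castAdd (σ : Perm (Fin a)) (π : Perm (Fin b)) (i : Fin a) :
    directSum σ π (Fin.castAdd b i) = Fin.castAdd b (σ i) := by
  simp [directSum, Equiv.permCongr_apply]

@[simp]
lemma directSum_natAdd (σ : Perm (Fin a)) (π : Perm (Fin b)) (i : Fin b) :
    directSum σ π (Fin.natAdd a i) = Fin.natAdd a (π i) := by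
  simp [directSum, Equiv.permCongr_apply]

/-- An occurrence in `σ` of the pattern `p 0, …, p (k - 1)`. Patterns are sequences on all of `ℕ`,
not permutations, so that their initial and final segments are again patterns. -/
def IsPatternOcc (k : ℕ) (p : ℕ → ℕ) {n : ℕ} (σ : Perm (Fin n)) (f : Fin k → Fin n) : Prop :=
  StrictMono f ∧ ∀ i j : Fin k, p i < p j ↔ σ (f i) < σ (f j)

/-- The number of occurrences in `σ` of the pattern `p 0, …, p (k - 1)`. -/
noncomputable def patternCount (k : ℕ) (p : ℕ → ℕ) {n : ℕ} (σ : Perm (Fin n)) : ℕ :=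
  {f : Fin k → Fin n | IsPatternOcc k p σ f}.ncard

/-- The pattern `p 0, …, p (k - 1)` is the direct sum of its first `m` entries and the others. -/
def SplitsAt (k : ℕ) (p : ℕ → ℕ) (m : ℕ) : Prop :=
  ∀ i j, i < m → m ≤ j → j < k → p i < p j

/-- The map sending the first `m` points by `g` into the first `a` points and the last `l` by `h`
into the last `b`. -/
def blockMap (g : Fin m → Fin a) (h : Fin l → Fin b) : Fin (m + l) → Fin (a + b) :=
  Fin.append (Fin.castAdd b ∘ g) (Fin.natAdd a ∘ h)

lemma splitsAt_add_iff {p : ℕ → ℕ} :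
    SplitsAt (m + l) p m ↔ ∀ (i : Fin m) (j : Fin l), p i < p (m + j) := by
  refine ⟨fun H i j => H i (m + j) i.2 (by omega) (by omega), fun H i j hi hj hjk => ?_⟩
  simpa [Nat.add_sub_cancel' hj] using H ⟨i, hi⟩ ⟨j - m, by omega⟩

lemma castAdd_lt_natAdd (i : Fin a) (j : Fin b) : Fin.castAdd b i < Fin.natAdd a j :=
  i.2.trans_le (Nat.le_add_right a j)

lemma isPatternOcc_blockMap_iff {p : ℕ → ℕ} {σ : Perm (Fin a)} {π : Perm (Fin b)}
    {g : Fin m → Fin a} {h : Fin l → Fin b} :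
    IsPatternOcc (m + l) p (directSum σ π) (blockMap g h) ↔
      SplitsAt (m + l) p m ∧ IsPatternOcc m p σ g ∧ IsPatternOcc l (fun i => p (m + i)) π h := by
  simp only [IsPatternOcc, StrictMono, splitsAt_add_iff, Fin.forall_fin_add, blockMap,
    Fin.append_left, Fin.append_right, Function.comp_apply, directSum_castAdd, directSum_natAdd,
    (Fin.strictMono_castAdd _).lt_iff_lt, (Fin.strictMono_natAdd _).lt_iff_lt,
    castAdd_lt_natAdd, (castAdd_lt_natAdd _ _).not_gt, Fin.val_castAdd, Fin.val_natAdd]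
  simp only [forall_and, iff_true, iff_false, false_imp_iff, implies_true, not_lt, true_and,
    and_true]
  exact ⟨fun ⟨⟨hg, hh⟩, ⟨hσ, hp⟩, _, hπ⟩ => ⟨hp, ⟨hg, hσ⟩, hh, hπ⟩,
    fun ⟨hp, ⟨hg, hσ⟩, hh, hπ⟩ => ⟨⟨hg, hh⟩, ⟨hσ, hp⟩, fun j i => (hp i j).le, hπ⟩⟩

lemma blockMap_injective :
    Function.Injective fun x : (Fin m → Fin a) × (Fin l → Fin b) => blockMap x.1 x.2 := by
  intro x y hxy
  simp only [funext_iff, Fin.forall_fin_add, blockMap, Fin.append_left, Fin.append_right,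
    Function.comp_apply, (Fin.castAdd_injective _ _).eq_iff,
    (Fin.natAdd_injective _ _).eq_iff] at hxy
  exact Prod.ext (funext hxy.1) (funext hxy.2)

lemma exists_blockMap_eq_iff {f : Fin (m + l) → Fin (a + b)} :
    (∃ g h, blockMap g h = f) ↔ ∀ i, (f i : ℕ) < a ↔ (i : ℕ) < m := by
  constructor
  · rintro ⟨g, h, rfl⟩
    simp [Fin.forall_fin_add, blockMap]
  · intro hf
    have hright (i : Fin l) : a ≤ f (Fin.natAdd m i) := by
      simpa using (hf (Fin.natAdd m i)).not
    refine ⟨fun i => (f (Fin.castAdd l i)).castLT ((hf _).2 i.2),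
      fun i => (f (Fin.natAdd m i) |>.cast (add_comm a b)).subNat a (hright i), ?_⟩
    ext i
    induction i using Fin.addCases with
    | left i => simp [blockMap]
    | right i => simp [blockMap]

open Classical in
lemma ncard_isPatternOcc_directSum_block {p : ℕ → ℕ} (σ : Perm (Fin a)) (π : Perm (Fin b)) :
    {f | IsPatternOcc (m + l) p (directSum σ π) f ∧ ∀ i, (f i : ℕ) < a ↔ (i : ℕ) < m}.ncard =
      if SplitsAt (m + l) p m then
        patternCount m p σ * patternCount l (fun i => p (m + i)) π else 0 := by
  have himage : {f | IsPatternOcc (m + l) p (directSum σ π) f ∧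
        ∀ i, (f i : ℕ) < a ↔ (i : ℕ) < m} =
      (fun x : (Fin m → Fin a) × (Fin l → Fin b) => blockMap x.1 x.2) ''
        {x | SplitsAt (m + l) p m ∧
          IsPatternOcc m p σ x.1 ∧ IsPatternOcc l (fun i => p (m + i)) π x.2} := by
    ext f
    simp only [← exists_blockMap_eq_iff, ← isPatternOcc_blockMap_iff]
    constructor
    · rintro ⟨hf, g, h, rfl⟩
      exact ⟨(g, h), hf, rfl⟩
    · rintro ⟨⟨g, h⟩, hf, rfl⟩
      exact ⟨hf, g, h, rfl⟩
  rw [himage, Set.ncard_image_of_injective _ blockMap_injective]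
  split_ifs with hp
  · simp only [hp, true_and]
    exact Set.ncard_prod (s := {g | IsPatternOcc m p σ g})
      (t := {h | IsPatternOcc l (fun i => p (m + i)) π h})
  · simp [hp]

lemma card_filter_val_lt_eq_iff {k n : ℕ} {f : Fin k → Fin n} (hf : Monotone f) {m : ℕ}
    (hm : m ≤ k) :
    (Finset.univ.filter fun i => (f i : ℕ) < a).card = m ↔ ∀ i, (f i : ℕ) < a ↔ (i : ℕ) < m := by
  constructor
  · rintro rfl i
    exact (Fin.lt_card_filter_univ_iff_apply_of_imp (fun i => (f i : ℕ) < a)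
      fun i j hji hi => (Fin.le_def.1 (hf hji)).trans_lt hi).symm
  · intro h
    simp only [h, Fin.card_filter_val_lt, min_eq_right hm]

open Classical in
lemma patternCount_directSum (k : ℕ) (p : ℕ → ℕ) (σ : Perm (Fin a)) (π : Perm (Fin b)) :
    patternCount k p (directSum σ π) = ∑ m ∈ Finset.range (k + 1), if SplitsAt k p m then
      patternCount m p σ * patternCount (k - m) (fun i => p (m + i)) π else 0 := by
  -- Sort the occurrences by the number `m` of their points that lie in the block of `σ`.
  rw [patternCount, Set.ncard_eq_toFinset_card',
    Finset.card_eq_sum_card_fiberwise (t := Finset.range (k + 1))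
      (f := fun f => (Finset.univ.filter fun i => (f i : ℕ) < a).card)]
  · refine Finset.sum_congr rfl fun m hm => ?_
    obtain ⟨l, rfl⟩ := Nat.exists_eq_add_of_le (Finset.mem_range_succ_iff.1 hm)
    rw [Nat.add_sub_cancel_left, ← ncard_isPatternOcc_directSum_block, Set.ncard_eq_toFinset_card']
    congr 1
    ext f
    simp only [Finset.mem_filter, Set.mem_toFinset, Set.mem_ofPred_eq]
    exact and_congr_right fun hf => card_filter_val_lt_eq_iff hf.1.monotone (Nat.le_add_right m l)
  · intro f _
    simpa [Nat.lt_succ_iff] using Finset.card_filter_le Finset.univ fun i => (f i : ℕ) < a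

end DirectSum

section PatternCount

variable {n a b : ℕ}

lemma patternCount_zero (p : ℕ → ℕ) (σ : Perm (Fin n)) : patternCount 0 p σ = 1 := by
  rw [patternCount, Set.ncard_eq_one]
  refine ⟨Fin.elim0, Set.eq_singleton_iff_unique_mem.2 ⟨⟨?_, ?_⟩, fun f _ => Subsingleton.elim _ _⟩⟩
  · exact Subsingleton.strictMono _
  · exact fun i => i.elim0

lemma patternCount_one (p : ℕ → ℕ) (σ : Perm (Fin n)) : patternCount 1 p σ = n := by
  have h (f : Fin 1 → Fin n) : IsPatternOcc 1 p σ f :=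
    ⟨Subsingleton.strictMono f, fun i j => by simp [Subsingleton.elim i j]⟩
  simp [patternCount, h, Set.ncard_univ]

lemma patternCount_congr {k : ℕ} {p p' : ℕ → ℕ} (h : ∀ i < k, ∀ j < k, p i < p j ↔ p' i < p' j)
    (σ : Perm (Fin n)) : patternCount k p σ = patternCount k p' σ := by
  have h' (i j : Fin k) : p i < p j ↔ p' i < p' j := h i i.2 j j.2
  simp only [patternCount, IsPatternOcc, h']

lemma ncard_strictMono (k n : ℕ) : {f : Fin k → Fin n | StrictMono f}.ncard = n.choose k := by
  have hrange : {f : Fin k → Fin n | StrictMono f} = Set.range ((⇑) : (Fin k ↪o Fin n) → _) :=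
    Set.ext fun f => ⟨fun hf => ⟨OrderEmbedding.ofStrictMono f hf, rfl⟩,
      by rintro ⟨g, rfl⟩; exact g.strictMono⟩
  rw [hrange, ← Nat.card_coe_set_eq, Nat.card_range_of_injective DFunLike.coe_injective,
    Nat.card_congr Set.powersetCard.ofFinEmbEquiv, Set.powersetCard.card, Nat.card_fin]

lemma lam_eq_patternCount {k : ℕ} {τ : Perm (Fin k)} {p : ℕ → ℕ}
    (hp : ∀ i j : Fin k, τ i < τ j ↔ p i < p j) (σ : Perm (Fin n)) :
    lam τ σ = patternCount k p σ := by
  simp only [lam, patternCount, IsOcc, IsPatternOcc, hp, ← Nat.card_coe_set_eq]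
  rfl

lemma patternCount_le_choose (k : ℕ) (p : ℕ → ℕ) (σ : Perm (Fin n)) :
    patternCount k p σ ≤ n.choose k := by
  rw [← ncard_strictMono]
  exact Set.ncard_le_ncard fun f hf => hf.1

lemma patternCount_id_one (k : ℕ) : patternCount k id (1 : Perm (Fin n)) = n.choose k := by
  rw [← ncard_strictMono, patternCount]
  congr 1
  ext f
  exact ⟨fun hf => hf.1, fun hf => ⟨hf, fun i j => hf.lt_iff_lt.symm⟩⟩

lemma patternCount_swap_one (r : ℕ) :
    patternCount (r + 2) (swap 0 1) (1 : Perm (Fin n)) = 0 := by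
  rw [patternCount, Set.ncard_eq_zero]
  refine Set.eq_empty_of_forall_notMem fun f ⟨hmono, hf⟩ => ?_
  have h10 : f 1 < f 0 := (hf 1 0).1 (by simp)
  exact h10.not_gt (hmono Fin.zero_lt_one)

lemma patternCount_swap_revPerm :
    patternCount 2 (swap 0 1) (Fin.revPerm : Perm (Fin n)) = n.choose 2 := by
  rw [← ncard_strictMono, patternCount]
  congr 1
  ext f
  refine ⟨fun hf => hf.1, fun hf => ⟨hf, fun i j => ?_⟩⟩
  have hswap : swap 0 1 (i : ℕ) < swap 0 1 (j : ℕ) ↔ j < i := by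
    fin_cases i <;> fin_cases j <;> simp
  simp only [hswap, Fin.revPerm_apply, Fin.rev_lt_rev, hf.lt_iff_lt]

open Classical in
lemma patternCount_succ_directSum (k : ℕ) (p : ℕ → ℕ) (σ : Perm (Fin a)) (π : Perm (Fin b)) :
    patternCount (k + 1) p (directSum σ π) = patternCount (k + 1) p σ + patternCount (k + 1) p π +
      ∑ m ∈ Finset.range k, if SplitsAt (k + 1) p (m + 1) then
        patternCount (m + 1) p σ * patternCount (k - m) (fun i => p (m + 1 + i)) π else 0 := by
  have h0 : SplitsAt (k + 1) p 0 := fun i j hi => absurd hi i.not_lt_zero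
  have hk : SplitsAt (k + 1) p (k + 1) := fun i j _ hj hjk => absurd hjk hj.not_gt
  rw [patternCount_directSum, Finset.sum_range_succ, Finset.sum_range_succ']
  simp only [h0, hk, if_true, patternCount_zero, zero_add, one_mul, mul_one, Nat.sub_self,
    Nat.sub_zero, Nat.add_sub_add_right]
  ring

lemma patternCount_id_directSum (k : ℕ) (σ : Perm (Fin a)) (π : Perm (Fin b)) :
    patternCount k id (directSum σ π) =
      ∑ m ∈ Finset.range (k + 1), patternCount m id σ * patternCount (k - m) id π := by
  rw [patternCount_directSum]
  refine Finset.sum_congr rfl fun m _ => ?_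
  have hsplit : SplitsAt k id m := fun i j hi hj _ => hi.trans_le hj
  rw [if_pos hsplit]
  congr 1
  exact patternCount_congr (by simp) π

lemma swap_zero_one_of_two_le {i : ℕ} (hi : 2 ≤ i) : swap 0 1 i = i :=
  Equiv.swap_apply_of_ne_of_ne (by omega) (by omega)

lemma splitsAt_swap_iff (r m : ℕ) : SplitsAt (r + 2) (swap 0 1) m ↔ m ≠ 1 := by
  constructor
  · rintro h rfl
    simpa using h 0 1 (by omega) (by omega) (by omega)
  · intro hm i j hi hj _
    have hj' : swap 0 1 j = j := swap_zero_one_of_two_le (by omega)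
    simp only [hj', Equiv.swap_apply_def]
    split_ifs <;> omega

lemma patternCount_swap_directSum (r : ℕ) (σ : Perm (Fin a)) (π : Perm (Fin b)) :
    patternCount (r + 2) (swap 0 1) (directSum σ π) =
      patternCount (r + 2) (swap 0 1) σ + patternCount (r + 2) (swap 0 1) π +
        ∑ m ∈ Finset.range r,
          patternCount (m + 2) (swap 0 1) σ * patternCount (r - m) id π := by
  have hshift (m : ℕ) : patternCount (r - m) (fun i => swap 0 1 (m + 2 + i)) π =
      patternCount (r - m) id π :=
    have hfix (i : ℕ) : swap 0 1 (m + 2 + i) = m + 2 + i := swap_zero_one_of_two_le (by omega)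
    patternCount_congr (fun i _ j _ => by simp only [hfix, id_eq, add_lt_add_iff_left]) π
  rw [patternCount_succ_directSum, Finset.sum_range_succ']
  simp [splitsAt_swap_iff, hshift]

end PatternCount

section SeparatingPair

/-- `σ` and `π` contain every pattern of order at most `k + 1` equally often, but `σ` has at
least `g` more occurrences of `2 1 3 … (k + 2)` than `π`. The inequalities for patterns of all
orders prevent cancellations, both when passing to direct sums and in a series of densities. -/
structure IsSeparatingPair (k g : ℕ) {n : ℕ} (σ π : Perm (Fin n)) : Prop where
  patternCount_eq : ∀ r ≤ k + 1, ∀ p, patternCount r p σ = patternCount r p π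
  id_le : ∀ r, patternCount r id σ ≤ patternCount r id π
  swap_le : ∀ r, patternCount (r + 2) (swap 0 1) π ≤ patternCount (r + 2) (swap 0 1) σ
  swap_add_le : patternCount (k + 2) (swap 0 1) π + g ≤ patternCount (k + 2) (swap 0 1) σ

variable {n : ℕ}

lemma IsSeparatingPair.mono {k g g' : ℕ} {σ π : Perm (Fin n)} (h : IsSeparatingPair k g σ π)
    (hg : g' ≤ g) : IsSeparatingPair k g' σ π :=
  { h with swap_add_le := (Nat.add_le_add_left hg _).trans h.swap_add_le }

lemma isSeparatingPair_revPerm_one : IsSeparatingPair 0 (n.choose 2) (Fin.revPerm : Perm (Fin n)) 1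
    where
  patternCount_eq r hr p := by
    obtain rfl | rfl : r = 0 ∨ r = 1 := by omega
    · rw [patternCount_zero, patternCount_zero]
    · rw [patternCount_one, patternCount_one]
  id_le r := (patternCount_le_choose r id _).trans_eq (patternCount_id_one r).symm
  swap_le r := by simp only [patternCount_swap_one, Nat.zero_le]
  swap_add_le := by rw [patternCount_swap_one, patternCount_swap_revPerm, zero_add]

lemma IsSeparatingPair.directSum {k g : ℕ} {σ π : Perm (Fin n)} (h : IsSeparatingPair k g σ π) :
    IsSeparatingPair (k + 1) (g * n) (directSum σ π) (directSum π σ) where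
  patternCount_eq r hr p := by
    obtain _ | r := r
    · rw [patternCount_zero, patternCount_zero]
    · rw [patternCount_succ_directSum, patternCount_succ_directSum,
        add_comm (patternCount (r + 1) p σ)]
      congr 1
      refine Finset.sum_congr rfl fun m hm => ?_
      have hmr := Finset.mem_range.1 hm
      rw [h.patternCount_eq (m + 1) (by omega), h.patternCount_eq (r - m) (by omega)]
  id_le r := by
    rw [patternCount_id_directSum, patternCount_id_directSum, ← Finset.sum_flip]
    refine (Finset.sum_congr rfl fun m hm => ?_).le
    rw [Nat.sub_sub_self (Finset.mem_range_succ_iff.1 hm), mul_comm]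
  swap_le r := by
    rw [patternCount_swap_directSum, patternCount_swap_directSum,
      add_comm (patternCount (r + 2) _ π)]
    gcongr
    · exact h.swap_le _
    · exact h.id_le _
  swap_add_le := by
    have hlast : patternCount (k + 2) (swap 0 1) π * n + g * n ≤
        patternCount (k + 2) (swap 0 1) σ * n := by
      rw [← add_mul]
      exact Nat.mul_le_mul_right n h.swap_add_le
    have hrest : ∑ m ∈ Finset.range k,
          patternCount (m + 2) (swap 0 1) π * patternCount (k + 1 - m) id σ ≤
        ∑ m ∈ Finset.range k,
          patternCount (m + 2) (swap 0 1) σ * patternCount (k + 1 - m) id π := by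
      gcongr
      · exact h.swap_le _
      · exact h.id_le _
    simp only [patternCount_swap_directSum, Finset.sum_range_succ, Nat.add_sub_cancel_left,
      patternCount_one]
    omega

lemma exists_isSeparatingPair (k q : ℕ) :
    ∃ σ π : Perm (Fin (2 ^ (k + 1) * q)), IsSeparatingPair k (q ^ (k + 2)) σ π := by
  induction k with
  | zero =>
    have hgap : q ^ 2 ≤ (2 * q).choose 2 := by
      rw [Nat.choose_two_right, mul_assoc, Nat.mul_div_cancel_left _ two_pos, sq]
      exact Nat.mul_le_mul_left q (by omega)
    exact ⟨Fin.revPerm, 1, isSeparatingPair_revPerm_one.mono hgap⟩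
  | succ k ih =>
    obtain ⟨σ, π, h⟩ := ih
    have hgap : q ^ (k + 1 + 2) ≤ q ^ (k + 2) * (2 ^ (k + 1) * q) := by
      rw [pow_succ q]
      exact Nat.mul_le_mul_left _ (Nat.le_mul_of_pos_left q (by positivity))
    rw [show 2 ^ (k + 1 + 1) * q = 2 ^ (k + 1) * q + 2 ^ (k + 1) * q by ring]
    exact ⟨directSum σ π, directSum π σ, h.directSum.mono hgap⟩

end SeparatingPair

section Density

lemma dens_eq {k n : ℕ} (τ : Perm (Fin k)) (σ : Perm (Fin n)) :
    dens τ σ = lam τ σ / n.choose k := by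
  unfold dens
  split_ifs with h
  · rfl
  · rw [Nat.choose_eq_zero_of_lt (not_le.1 h), Nat.cast_zero, div_zero]

lemma exists_pattern_subDens_eq (τ : Perms) :
    ∃ p : ℕ → ℕ, ∀ σ : Perms, subDens τ σ = patternCount τ.1 p σ.2 / σ.1.choose τ.1 := by
  refine ⟨Function.extend Fin.val (fun i => (τ.2 i : ℕ)) 0, fun σ => ?_⟩
  rw [subDens, dens_eq, lam_eq_patternCount]
  simp [Fin.val_injective.extend_apply]

lemma subDens_mem_Icc (τ σ : Perms) : subDens τ σ ∈ Set.Icc (0 : ℝ) 1 := by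
  obtain ⟨p, hp⟩ := exists_pattern_subDens_eq τ
  rw [hp]
  exact ⟨by positivity,
    div_le_one_of_le₀ (mod_cast patternCount_le_choose _ _ _) (Nat.cast_nonneg _)⟩

/-- The permutation `2 1 3 … (k + 2)`. -/
def swapPerm (k : ℕ) : Perms := ⟨k + 2, swap 0 1⟩

lemma subDens_swapPerm (k : ℕ) (σ : Perms) :
    subDens (swapPerm k) σ = patternCount (k + 2) (swap 0 1) σ.2 / σ.1.choose (k + 2) := by
  have hswap (i j : Fin (k + 2)) :
      swap 0 1 i < swap 0 1 j ↔ swap 0 1 (i : ℕ) < swap 0 1 (j : ℕ) := by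
    rw [Fin.lt_def, Fin.val_injective.map_swap, Fin.val_injective.map_swap, Fin.val_zero,
      Fin.val_one]
  rw [subDens, dens_eq, swapPerm, lam_eq_patternCount hswap]

lemma IsSeparatingPair.subDens_eq {k g n : ℕ} {σ π : Perm (Fin n)} (h : IsSeparatingPair k g σ π)
    {τ : Perms} (hτ : τ.1 ≤ k + 1) : subDens τ ⟨n, σ⟩ = subDens τ ⟨n, π⟩ := by
  obtain ⟨p, hp⟩ := exists_pattern_subDens_eq τ
  simp only [hp, h.patternCount_eq _ hτ]

lemma IsSeparatingPair.subDens_swapPerm_le {k g n : ℕ} {σ π : Perm (Fin n)}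
    (h : IsSeparatingPair k g σ π) (i : ℕ) :
    subDens (swapPerm i) ⟨n, π⟩ ≤ subDens (swapPerm i) ⟨n, σ⟩ := by
  simp only [subDens_swapPerm]
  gcongr
  exact h.swap_le i

lemma IsSeparatingPair.div_pow_le_subDens_sub {k g n : ℕ} {σ π : Perm (Fin n)}
    (h : IsSeparatingPair k g σ π) (hg : 0 < g) :
    (g : ℝ) / (n : ℝ) ^ (k + 2) ≤
      subDens (swapPerm k) ⟨n, σ⟩ - subDens (swapPerm k) ⟨n, π⟩ := by
  have hpos : 0 < n.choose (k + 2) :=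
    (hg.trans_le (le_of_add_le_right h.swap_add_le)).trans_le (patternCount_le_choose _ _ σ)
  have hgap : (g : ℝ) ≤
      patternCount (k + 2) (swap 0 1) σ - patternCount (k + 2) (swap 0 1) π :=
    le_sub_iff_add_le'.2 (mod_cast h.swap_add_le)
  have hchoose : (n.choose (k + 2) : ℝ) ≤ (n : ℝ) ^ (k + 2) := mod_cast Nat.choose_le_pow n (k + 2)
  simp only [subDens_swapPerm, ← sub_div]
  exact div_le_div₀ (hgap.trans' g.cast_nonneg) hgap (mod_cast hpos) hchoose

lemma exists_large_subDens_swapPerm_gap (k n₀ : ℕ) :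
    ∃ σ π : Perms, n₀ ≤ σ.1 ∧ n₀ ≤ π.1 ∧
      (∀ τ : Perms, τ.1 ≤ k + 1 → subDens τ σ = subDens τ π) ∧
      (∀ i, subDens (swapPerm i) π ≤ subDens (swapPerm i) σ) ∧
      1 / (2 ^ (k + 1)) ^ (k + 2) ≤ subDens (swapPerm k) σ - subDens (swapPerm k) π := by
  obtain ⟨σ, π, h⟩ := exists_isSeparatingPair k (n₀ + 1)
  have hn₀ : n₀ ≤ 2 ^ (k + 1) * (n₀ + 1) :=
    n₀.le_succ.trans (Nat.le_mul_of_pos_left _ (by positivity))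
  have hgap := h.div_pow_le_subDens_sub (by positivity)
  rw [Nat.cast_mul, mul_pow, Nat.cast_pow, div_mul_cancel_right₀ (by positivity)] at hgap
  refine ⟨⟨_, σ⟩, ⟨_, π⟩, hn₀, hn₀, fun _ => h.subDens_eq, h.subDens_swapPerm_le, ?_⟩
  simpa using hgap

end Density

section Parameter

/-- The uniformity that the densities induce on permutations; a parameter is finitely approximable
if it is uniformly continuous with respect to it. -/
noncomputable def densityUniformity : Filter (Perms × Perms) :=
  ⨅ τ, comap (fun x => subDens τ x.1 - subDens τ x.2) (𝓝 0)

lemma finitelyApproximable_of_tendsto {f : Perms → ℝ}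
    (hf : Tendsto (fun x : Perms × Perms => f x.1 - f x.2) densityUniformity (𝓝 0)) :
    FinitelyApproximable f := by
  intro ε hε
  have hbasis := HasBasis.iInf' fun τ => (Metric.nhds_basis_ball (x := (0 : ℝ))).comap
    fun x : Perms × Perms => subDens τ x.1 - subDens τ x.2
  obtain ⟨⟨A, r⟩, ⟨hA, hr⟩, hsub⟩ := hbasis.mem_iff.1 (hf (Metric.ball_mem_nhds 0 hε))
  obtain ⟨δ, hδr, hδ⟩ := (((eventually_all_finite hA).2 fun τ hτ =>
    (Ioo_mem_nhdsGT (hr τ hτ) : ∀ᶠ δ in 𝓝[>] (0 : ℝ), _)).and self_mem_nhdsWithin).exists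
  refine ⟨δ, hδ, 0, hA.toFinset, fun σ π _ _ hσπ => ?_⟩
  have hmem : (σ, π) ∈ ⋂ τ ∈ A,
      (fun x : Perms × Perms => subDens τ x.1 - subDens τ x.2) ⁻¹' Metric.ball 0 (r τ) := by
    refine Set.mem_iInter₂.2 fun τ hτ => ?_
    simpa using (hσπ τ (hA.mem_toFinset.2 hτ)).trans (hδr τ hτ).2
  simpa using hsub hmem

lemma not_finitelyForcible_of_forall_order {f : Perms → ℝ}
    (h : ∀ k, ∃ ε > 0, ∀ n₀, ∃ σ π : Perms, n₀ ≤ σ.1 ∧ n₀ ≤ π.1 ∧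
      (∀ τ : Perms, τ.1 ≤ k → subDens τ σ = subDens τ π) ∧ ε ≤ f σ - f π) :
    ¬ FinitelyForcible f := by
  rintro ⟨A, hA⟩
  obtain ⟨ε, hε, hpairs⟩ := h (A.sup Sigma.fst)
  obtain ⟨n₀, δ, hδ, hforce⟩ := hA ε hε
  obtain ⟨σ, π, hσ, hπ, heq, hgap⟩ := hpairs n₀
  refine (hgap.trans (le_abs_self _)).not_gt (hforce σ π hσ hπ fun τ hτ => ?_)
  rwa [heq τ (Finset.le_sup (f := Sigma.fst) hτ), sub_self, abs_zero]

/-- The parameter `σ ↦ ∑ᵢ wᵢ t(τᵢ, σ)`, a series of densities; useful for summable weights `w`. -/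
noncomputable def densitySeries (w : ℕ → ℝ) (τ : ℕ → Perms) (σ : Perms) : ℝ :=
  ∑' i, w i * subDens (τ i) σ

variable {w : ℕ → ℝ}

lemma abs_mul_le_of_abs_le_one {x y : ℝ} (hy : |y| ≤ 1) : |x * y| ≤ |x| := by
  rw [abs_mul]
  exact mul_le_of_le_one_right (abs_nonneg x) hy

lemma abs_subDens_le_one (τ σ : Perms) : |subDens τ σ| ≤ 1 := by
  obtain ⟨h0, h1⟩ := subDens_mem_Icc τ σ
  rwa [abs_of_nonneg h0]

lemma summable_mul_subDens (hw : Summable w) (τ : ℕ → Perms) (σ : Perms) :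
    Summable fun i => w i * subDens (τ i) σ :=
  hw.abs.of_norm_bounded fun _ => abs_mul_le_of_abs_le_one (abs_subDens_le_one _ _)

lemma densitySeries_sub (hw : Summable w) (τ : ℕ → Perms) (σ π : Perms) :
    densitySeries w τ σ - densitySeries w τ π =
      ∑' i, w i * (subDens (τ i) σ - subDens (τ i) π) := by
  simp only [densitySeries, mul_sub]
  exact ((summable_mul_subDens hw τ σ).tsum_sub (summable_mul_subDens hw τ π)).symm

lemma abs_densitySeries_le (hw : Summable w) (τ : ℕ → Perms) (σ : Perms) :
    |densitySeries w τ σ| ≤ ∑' i, |w i| := by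
  rw [densitySeries, ← Real.norm_eq_abs]
  exact tsum_of_norm_bounded hw.abs.hasSum fun _ =>
    abs_mul_le_of_abs_le_one (abs_subDens_le_one _ _)

lemma finitelyApproximable_densitySeries (hw : Summable w) (τ : ℕ → Perms) :
    FinitelyApproximable (densitySeries w τ) := by
  refine finitelyApproximable_of_tendsto ?_
  simp only [densitySeries_sub hw]
  have hterm (i : ℕ) : Tendsto (fun x : Perms × Perms =>
      w i * (subDens (τ i) x.1 - subDens (τ i) x.2)) densityUniformity (𝓝 0) := by
    have hdens : Tendsto (fun x : Perms × Perms => subDens (τ i) x.1 - subDens (τ i) x.2)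
        densityUniformity (𝓝 0) := tendsto_comap.mono_left (iInf_le _ (τ i))
    simpa using hdens.const_mul (w i)
  have hbound (x : Perms × Perms) (i : ℕ) :
      ‖w i * (subDens (τ i) x.1 - subDens (τ i) x.2)‖ ≤ |w i| :=
    abs_mul_le_of_abs_le_one
      (abs_sub_le_of_nonneg_of_le (subDens_mem_Icc _ _).1 (subDens_mem_Icc _ _).2
        (subDens_mem_Icc _ _).1 (subDens_mem_Icc _ _).2)
  simpa using tendsto_tsum_of_dominated_convergence hw.abs hterm (.of_forall hbound)

lemma not_finitelyForcible_densitySeries_swapPerm (hw : Summable w) (hpos : ∀ i, 0 < w i) :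
    ¬ FinitelyForcible (densitySeries w swapPerm) := by
  refine not_finitelyForcible_of_forall_order fun k =>
    ⟨w k * (1 / (2 ^ (k + 1)) ^ (k + 2)), mul_pos (hpos k) (by positivity), fun n₀ => ?_⟩
  obtain ⟨σ, π, hσ, hπ, heq, hle, hgap⟩ := exists_large_subDens_swapPerm_gap k n₀
  refine ⟨σ, π, hσ, hπ, fun τ hτ => heq τ (hτ.trans k.le_succ), ?_⟩
  have hsum : Summable fun i => w i * (subDens (swapPerm i) σ - subDens (swapPerm i) π) := by
    simp only [mul_sub]
    exact (summable_mul_subDens hw swapPerm σ).sub (summable_mul_subDens hw swapPerm π)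
  rw [densitySeries_sub hw]
  calc w k * (1 / (2 ^ (k + 1)) ^ (k + 2))
      ≤ w k * (subDens (swapPerm k) σ - subDens (swapPerm k) π) :=
        mul_le_mul_of_nonneg_left hgap (hpos k).le
    _ ≤ ∑' i, w i * (subDens (swapPerm i) σ - subDens (swapPerm i) π) :=
        hsum.le_tsum k fun i _ => mul_nonneg (hpos i).le (sub_nonneg.2 (hle i))

end Parameter

/-- **Theorem 2.** There exists a bounded permutation parameter that is finitely
approximable but not finitely forcible. -/
theorem exists_approximable_not_forcible :
    ∃ f : Perms → ℝ, (∃ M : ℝ, ∀ σ : Perms, |f σ| ≤ M) ∧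
      FinitelyApproximable f ∧ ¬ FinitelyForcible f := by
  have hw : Summable fun i : ℕ => (1 / 2 : ℝ) ^ i := summable_geometric_two
  exact ⟨densitySeries (fun i => (1 / 2) ^ i) swapPerm,
    ⟨_, abs_densitySeries_le hw swapPerm⟩,
    finitelyApproximable_densitySeries hw swapPerm,
    not_finitelyForcible_densitySeries_swapPerm hw fun i => by positivity⟩
end

section
/- For every finite set of permutations 𝒜 = {τ_1,…,τ_k}, there exist a permutation τ and permutons μ and μ' such that t(τ_i,μ) = t(τ_i,μ') for every i ∈ [k] and t(τ,μ) ≠ t(τ,μ'). -/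
open Filter Topology

open MeasureTheory

/-- A permuton: a Borel probability measure on `[0,1]²` (modeled as a measure on
`ℝ × ℝ` giving full mass to the unit square) with uniform marginals. -/
structure Permuton where
  μ : Measure (ℝ × ℝ)
  prob : IsProbabilityMeasure μ
  margX : ∀ a b : ℝ, 0 ≤ a → a ≤ b → b ≤ 1 →
    μ (Set.Icc a b ×ˢ Set.Icc (0 : ℝ) 1) = ENNReal.ofReal (b - a)
  margY : ∀ a b : ℝ, 0 ≤ a → a ≤ b → b ≤ 1 →
    μ (Set.Icc (0 : ℝ) 1 ×ˢ Set.Icc a b) = ENNReal.ofReal (b - a)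

/-- The density `t(τ,P)` of a pattern `τ` of order `k` in a permuton `P`:
`k!` times the `μ^{⊗k}`-measure of the set of `k`-tuples of points whose first
coordinates are increasing and whose second coordinates follow the pattern `τ`. -/
noncomputable def pdens {k : ℕ} (τ : Equiv.Perm (Fin k)) (P : Permuton) : ℝ :=
  haveI : IsProbabilityMeasure P.μ := P.prob
  (k.factorial : ℝ) *
    (Measure.pi (fun _ : Fin k => P.μ)
      {g : Fin k → ℝ × ℝ |
        (∀ i j : Fin k, i < j → (g i).1 < (g j).1) ∧
        (∀ i j : Fin k, (g i).2 < (g j).2 ↔ τ i < τ j)}).toReal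

/-- Density of a permutation of arbitrary order in a permuton. -/
noncomputable def permutonDens (τ : Perms) (P : Permuton) : ℝ := pdens τ.2 P

/-! Replace each point of the diagram of `σ : Equiv.Perm (Fin n)` by an increasing segment. The
density of `τ` in the resulting permuton depends on `σ` only through the number of tuples of
columns with each given table of horizontal and vertical comparisons. For patterns of bounded
order these polynomially bounded counts cannot separate the `m!` permutations of order `2 * m`
that arise by inflating each point of a permutation of order `m` to a descent, so two such `σ ≠
σ'` give permutons that agree on `𝒜`. The pattern `σ` tells the two permutons apart: consecutive
positions never carry values `v` and `v + 1` in this order, so no two of its points fit on one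
segment, whence it occurs in the permuton of `σ` but not in that of `σ'`. -/

open Polynomial in
theorem isLittleO_eval_natCast_factorial (P : ℝ[X]) :
    (fun n : ℕ => P.eval (n : ℝ)) =o[atTop] fun n => (n.factorial : ℝ) := by
  have poly_le_pow : (fun n : ℕ => P.eval (n : ℝ)) =O[atTop] fun n => (n : ℝ) ^ P.natDegree := by
    simpa [Function.comp_def] using (isBigO_atTop_of_degree_le P (X ^ P.natDegree)
      (by simp)).comp_tendsto tendsto_natCast_atTop_atTop
  have pow_lt_exp : (fun n : ℕ => (n : ℝ) ^ P.natDegree) =o[atTop] fun n => (2 : ℝ) ^ n :=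
    isLittleO_pow_const_const_pow_of_one_lt _ one_lt_two
  have exp_lt_factorial : (fun n => (2 : ℝ) ^ n) =o[atTop] fun n => (n.factorial : ℝ) :=
    Asymptotics.isLittleO_of_tendsto (fun n h => absurd h (by positivity))
      (FloorSemiring.tendsto_pow_div_factorial_atTop 2)
  exact poly_le_pow.trans_isLittleO (pow_lt_exp.trans exp_lt_factorial)

/-- The points with horizontal coordinates `x i` and vertical coordinates `y i`, listed from left to
right, are in the relative order `τ`. -/
def InducesPattern {k : ℕ} {X Y : Type*} [Preorder X] [Preorder Y] (τ : Equiv.Perm (Fin k))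
    (x : Fin k → X) (y : Fin k → Y) : Prop :=
  StrictMono x ∧ ∀ i j, y i < y j ↔ τ i < τ j

theorem inducesPattern_comp_iff {k : ℕ} {X Y X' Y' : Type*} [LinearOrder X] [LinearOrder Y]
    [Preorder X'] [Preorder Y'] (τ : Equiv.Perm (Fin k)) {x : Fin k → X} {y : Fin k → Y}
    {f : X → X'} {g : Y → Y'} (hf : StrictMono f) (hg : StrictMono g) :
    InducesPattern τ (f ∘ x) (g ∘ y) ↔ InducesPattern τ x y := by
  simp only [InducesPattern, StrictMono, Function.comp_apply, hf.lt_iff_lt, hg.lt_iff_lt]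

theorem measurableSet_inducesPattern {k : ℕ} {Ω X Y : Type*} [MeasurableSpace Ω]
    [LinearOrder X] [TopologicalSpace X] [OrderClosedTopology X] [SecondCountableTopology X]
    [MeasurableSpace X] [OpensMeasurableSpace X]
    [LinearOrder Y] [TopologicalSpace Y] [OrderClosedTopology Y] [SecondCountableTopology Y]
    [MeasurableSpace Y] [OpensMeasurableSpace Y] (τ : Equiv.Perm (Fin k))
    {x : Ω → Fin k → X} {y : Ω → Fin k → Y} (hx : ∀ i, Measurable (x · i))
    (hy : ∀ i, Measurable (y · i)) : MeasurableSet {ω | InducesPattern τ (x ω) (y ω)} := by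
  refine measurableSet_setOfPred.2 (.and ?_ ?_)
  · exact .forall fun i => .forall fun j =>
      measurable_const.imp (measurableSet_setOfPred.1 (measurableSet_lt (hx i) (hx j)))
  · exact .forall fun i => .forall fun j =>
      (measurableSet_setOfPred.1 (measurableSet_lt (hy i) (hy j))).iff measurable_const

section Inflation

variable {k n : ℕ} {α : Type*}

/-- The points `w i` induce `τ` in the inflation of `σ` by increasing copies of `α`. The point of
the inflation in column `b` and at position `u` of its copy is encoded by `(b, u)`; its horizontal
and vertical coordinates are `(b, u)` and `(σ b, u)`, ordered lexicographically. -/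
def InducesInInflation [Preorder α] (τ : Equiv.Perm (Fin k)) (σ : Equiv.Perm (Fin n))
    (w : Fin k → Fin n × α) : Prop :=
  InducesPattern τ (fun i => toLex (w i)) fun i => toLex (σ (w i).1, (w i).2)

/-- The horizontal and vertical comparisons between the points of the diagram of `σ` in the columns
`b i`. -/
def cmpTable (σ : Equiv.Perm (Fin n)) (b : Fin k → Fin n) (i j : Fin k) : Ordering × Ordering :=
  (cmp (b i) (b j), cmp (σ (b i)) (σ (b j)))

theorem inducesInInflation_congr [Preorder α] (τ : Equiv.Perm (Fin k)) {σ σ' : Equiv.Perm (Fin n)}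
    {b b' : Fin k → Fin n} (h : cmpTable σ b = cmpTable σ' b') (u : Fin k → α) :
    InducesInInflation τ σ (fun i => (b i, u i)) ↔
      InducesInInflation τ σ' (fun i => (b' i, u i)) := by
  have lex_lt_iff (c d : Fin n) (s t : α) :
      toLex (c, s) < toLex (d, t) ↔ cmp c d = .lt ∨ cmp c d = .eq ∧ s < t := by
    rw [Prod.Lex.toLex_lt_toLex, cmp_eq_lt_iff, cmp_eq_eq_iff]
  have cmp_eq (i j : Fin k) : cmp (b i) (b j) = cmp (b' i) (b' j) ∧
      cmp (σ (b i)) (σ (b j)) = cmp (σ' (b' i)) (σ' (b' j)) :=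
    Prod.ext_iff.1 (congrFun₂ h i j)
  simp only [InducesInInflation, InducesPattern, StrictMono, lex_lt_iff, cmp_eq]

theorem inducesInInflation_self [Preorder α] (σ : Equiv.Perm (Fin n)) (u : Fin n → α) :
    InducesInInflation σ σ fun i => (i, u i) := by
  refine ⟨fun i j hij => Prod.Lex.toLex_lt_toLex.2 (.inl hij), fun i j => ?_⟩
  rw [Prod.Lex.toLex_lt_toLex]
  refine ⟨?_, .inl⟩
  rintro (hlt | ⟨heq, hlt⟩)
  · exact hlt
  · cases σ.injective heq
    exact absurd hlt (lt_irrefl _)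

/-- `σ` never takes consecutive increasing values at consecutive positions. -/
def SuccessionFree (σ : Equiv.Perm (Fin n)) : Prop :=
  ∀ ⦃i j⦄, i ⋖ j → ¬σ i ⋖ σ j

theorem SuccessionFree.strictMono_fst [Preorder α] {σ : Equiv.Perm (Fin n)} (hσ : SuccessionFree σ)
    {m : ℕ} {σ' : Equiv.Perm (Fin m)} {w : Fin n → Fin m × α} (hw : InducesInInflation σ σ' w) :
    StrictMono fun i => (w i).1 := by
  obtain ⟨hx, hy⟩ := hw
  refine (strictMono_iff_forall_covBy _).2 fun i j hij => ?_
  refine (Prod.Lex.toLex_lt_toLex.1 (hx hij.lt)).resolve_right ?_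
  -- Otherwise a value strictly between `σ i` and `σ j` is taken on the same segment, hence at a
  -- position strictly between `i` and `j`.
  rintro ⟨hcol, hpos⟩
  have hij' : σ i < σ j := (hy i j).1 (Prod.Lex.toLex_lt_toLex.2 (.inr ⟨congrArg σ' hcol, hpos⟩))
  obtain ⟨v, hiv, hvj⟩ := (not_covBy_iff hij').1 (hσ hij)
  obtain ⟨l, rfl⟩ := σ.surjective v
  have hil := (hy i l).2 hiv
  have hlj := (hy l j).2 hvj
  have hcol_l : (w l).1 = (w i).1 := σ'.injective <| le_antisymm
    ((Prod.Lex.monotone_fst _ _ hlj.le).trans_eq (congrArg σ' hcol.symm))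
    (Prod.Lex.monotone_fst _ _ hil.le)
  simp only [Prod.Lex.toLex_lt_toLex, hcol_l, ← hcol, lt_irrefl, true_and, false_or] at hil hlj
  exact hij.2 (hx.lt_iff_lt.1 (Prod.Lex.toLex_lt_toLex.2 (.inr ⟨hcol_l.symm, hil⟩)))
    (hx.lt_iff_lt.1 (Prod.Lex.toLex_lt_toLex.2 (.inr ⟨hcol_l.trans hcol, hlj⟩)))

theorem perm_eq_of_forall_lt {σ σ' : Equiv.Perm (Fin n)} (h : ∀ i j, σ' i < σ' j → σ i < σ j) :
    σ = σ' := by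
  have hmono : StrictMono (σ ∘ σ'.symm) := fun i j hij => h _ _ (by simpa using hij)
  exact DFunLike.coe_injective ((Equiv.comp_symm_eq _ _ _).1 hmono.eq_id)

theorem SuccessionFree.eq_of_inducesInInflation [Preorder α] {σ σ' : Equiv.Perm (Fin n)}
    (hσ : SuccessionFree σ) {w : Fin n → Fin n × α} (hw : InducesInInflation σ σ' w) : σ = σ' := by
  have hfst : (fun i => (w i).1) = id := (hσ.strictMono_fst hw).eq_id
  refine perm_eq_of_forall_lt fun i j hij => (hw.2 i j).1 (Prod.Lex.toLex_lt_toLex.2 (.inl ?_))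
  rwa [congrFun hfst i, congrFun hfst j]

/-- The permutation obtained from `π` by replacing each point of its diagram with a descent. -/
def inflateDescents {m : ℕ} (π : Equiv.Perm (Fin m)) : Equiv.Perm (Fin (m * 2)) :=
  finProdFinEquiv.permCongr (π.prodCongr (Equiv.swap 0 1))

theorem inflateDescents_apply {m : ℕ} (π : Equiv.Perm (Fin m)) (p : Fin m × Fin 2) :
    inflateDescents π (finProdFinEquiv p) = finProdFinEquiv (π p.1, Equiv.swap 0 1 p.2) := by
  simp [inflateDescents, Equiv.permCongr_apply, Prod.map]

theorem inflateDescents_injective {m : ℕ} :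
    Function.Injective (inflateDescents : Equiv.Perm (Fin m) → _) := by
  intro π π' h
  ext1 i
  have := DFunLike.congr_fun h (finProdFinEquiv (i, 0))
  simp only [inflateDescents_apply] at this
  exact congrArg Prod.fst (finProdFinEquiv.injective this)

theorem successionFree_inflateDescents {m : ℕ} (π : Equiv.Perm (Fin m)) :
    SuccessionFree (inflateDescents π) := by
  intro i j hij hval
  obtain ⟨⟨a, c⟩, rfl⟩ := finProdFinEquiv.surjective i
  obtain ⟨⟨b, d⟩, rfl⟩ := finProdFinEquiv.surjective j
  rw [inflateDescents_apply, inflateDescents_apply] at hval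
  simp only [Fin.covBy_iff, Nat.covBy_iff_add_one_eq, finProdFinEquiv_apply_val] at hij hval
  have hswap : ∀ c : Fin 2, (Equiv.swap 0 1 c).val = 1 - c.val := by decide
  have hcol : (π a : ℕ) = π b ↔ (a : ℕ) = b := by
    rw [Fin.val_inj, Fin.val_inj, π.injective.eq_iff]
  rw [hswap, hswap] at hval
  lia

/-- The number of `k`-tuples of columns of `σ` with comparison table `T`. -/
noncomputable def cmpTableCount (σ : Equiv.Perm (Fin n))
    (T : Fin k → Fin k → Ordering × Ordering) : ℕ :=
  Nat.card {b : Fin k → Fin n // cmpTable σ b = T}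

theorem cmpTableCount_le (σ : Equiv.Perm (Fin n)) (T : Fin k → Fin k → Ordering × Ordering) :
    cmpTableCount σ T ≤ n ^ k := by
  simpa [cmpTableCount] using Finite.card_subtype_le fun b : Fin k → Fin n => cmpTable σ b = T

theorem exists_equiv_cmpTable_eq {σ σ' : Equiv.Perm (Fin n)}
    (h : ∀ T : Fin k → Fin k → Ordering × Ordering, cmpTableCount σ T = cmpTableCount σ' T) :
    ∃ e : (Fin k → Fin n) ≃ (Fin k → Fin n), ∀ b, cmpTable σ' (e b) = cmpTable σ b :=
  ⟨Equiv.ofFiberEquiv fun T => (Finite.card_eq.1 (h T)).some, Equiv.ofFiberEquiv_map _⟩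

open Polynomial in
theorem exists_ne_cmpTableCount_inflateDescents_eq {ι : Type*} [Finite ι] (k : ι → ℕ) :
    ∃ (m : ℕ) (π π' : Equiv.Perm (Fin m)), π ≠ π' ∧
      ∀ i (T : Fin (k i) → Fin (k i) → Ordering × Ordering),
        cmpTableCount (inflateDescents π) T = cmpTableCount (inflateDescents π') T := by
  classical
  cases nonempty_fintype ι
  let Table := Σ i, Fin (k i) → Fin (k i) → Ordering × Ordering
  let bound : ℝ[X] := ∏ p : Table, ((X * 2) ^ k p.1 + 1)
  obtain ⟨m, hm⟩ :=
    ((isLittleO_eval_natCast_factorial bound).bound one_half_pos).exists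
  let counts (π : Equiv.Perm (Fin m)) (p : Table) : Fin ((m * 2) ^ k p.1 + 1) :=
    ⟨cmpTableCount (inflateDescents π) p.2, Nat.lt_succ_of_le (cmpTableCount_le _ _)⟩
  have card_lt : Fintype.card (∀ p : Table, Fin ((m * 2) ^ k p.1 + 1)) <
      Fintype.card (Equiv.Perm (Fin m)) := by
    have hfact : (0 : ℝ) < m.factorial := by positivity
    have heval : bound.eval (m : ℝ) < m.factorial := by
      simp only [Real.norm_eq_abs, Nat.abs_cast] at hm
      linarith [le_abs_self (bound.eval (m : ℝ))]
    simp only [bound, eval_prod, eval_add, eval_pow, eval_mul, eval_X, eval_ofNat, eval_one]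
      at heval
    simpa only [Fintype.card_pi, Fintype.card_fin, Fintype.card_perm] using mod_cast heval
  obtain ⟨π, π', hne, heq⟩ := Fintype.exists_ne_map_eq_of_card_lt counts card_lt
  exact ⟨m, π, π', hne, fun i T => congrArg Fin.val (congrFun heq ⟨i, T⟩)⟩

end Inflation

theorem iUnion_fin_Ico (n : ℕ) : ⋃ b : Fin n, Set.Ico (b : ℝ) (b + 1) = Set.Ico 0 (n : ℝ) := by
  ext x
  simp only [Set.mem_iUnion, Set.mem_Ico]
  constructor
  · rintro ⟨b, hb, hb'⟩
    have : (b : ℝ) + 1 ≤ n := mod_cast b.isLt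
    exact ⟨(Nat.cast_nonneg _).trans hb, hb'.trans_le this⟩
  · rintro ⟨h0, hn⟩
    exact ⟨⟨⌊x⌋₊, (Nat.floor_lt h0).2 hn⟩, Nat.floor_le h0, Nat.lt_floor_add_one x⟩

theorem sum_volume_fin_Ico_inter (n : ℕ) {S : Set ℝ} (hS : MeasurableSet S) :
    ∑ b : Fin n, volume (Set.Ico (b : ℝ) (b + 1) ∩ S) = volume (Set.Ico 0 (n : ℝ) ∩ S) := by
  have hdisj : Pairwise (Function.onFun Disjoint fun b : Fin n => Set.Ico (b : ℝ) (b + 1)) :=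
    fun b c hbc => by
      simpa using Set.pairwise_disjoint_Ico_intCast ℝ (i := (b : ℤ)) (j := (c : ℤ))
        (by simpa [Fin.val_inj] using hbc)
  rw [← iUnion_fin_Ico, Set.iUnion_inter, measure_iUnion, tsum_fintype]
  · exact hdisj.mono fun _ _ h => h.mono Set.inter_subset_left Set.inter_subset_left
  · exact fun b => measurableSet_Ico.inter hS

theorem measurePreserving_perm_uniformOn {Ω : Type*} [Finite Ω] [MeasurableSpace Ω]
    [MeasurableSingletonClass Ω] (σ : Equiv.Perm Ω) :
    MeasurePreserving σ (ProbabilityTheory.uniformOn Set.univ)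
      (ProbabilityTheory.uniformOn Set.univ) := by
  cases nonempty_fintype Ω
  refine ⟨measurable_of_countable σ, Measure.ext_of_singleton fun a => ?_⟩
  rw [Measure.map_apply (measurable_of_countable σ) (measurableSet_singleton a),
    ← Equiv.image_symm_eq_preimage, Set.image_singleton]
  simp only [ProbabilityTheory.uniformOn_univ, Measure.count_singleton]

namespace Permuton

open ProbabilityTheory (uniformOn uniformOn_univ)

section OfMeasurePreserving

variable {Ω : Type*} [MeasurableSpace Ω] {P : Measure Ω} {f g : Ω → ℝ}

theorem measure_preimage_Icc_inter (hf : MeasurePreserving f P (volume.restrict (Set.Icc 0 1)))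
    (hg : MeasurePreserving g P (volume.restrict (Set.Icc 0 1))) {a b : ℝ} (ha : 0 ≤ a)
    (hb : b ≤ 1) : P (f ⁻¹' Set.Icc a b ∩ g ⁻¹' Set.Icc 0 1) = ENNReal.ofReal (b - a) := by
  have hconull : P (g ⁻¹' Set.Icc 0 1)ᶜ = 0 := by
    rw [← Set.preimage_compl, hg.measure_preimage measurableSet_Icc.compl.nullMeasurableSet,
      Measure.restrict_apply measurableSet_Icc.compl, Set.compl_inter_self, measure_empty]
  rw [measure_inter_conull hconull, hf.measure_preimage measurableSet_Icc.nullMeasurableSet,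
    Measure.restrict_apply measurableSet_Icc, Set.inter_eq_left.2 (Set.Icc_subset_Icc ha hb),
    Real.volume_Icc]

/-- The joint law of two uniform random variables on `[0,1]`. -/
noncomputable def ofMeasurePreserving
    (hf : MeasurePreserving f P (volume.restrict (Set.Icc 0 1)))
    (hg : MeasurePreserving g P (volume.restrict (Set.Icc 0 1))) : Permuton where
  μ := P.map fun ω => (f ω, g ω)
  prob := ⟨by
    rw [Measure.map_apply (hf.measurable.prodMk hg.measurable) .univ, Set.preimage_univ,
      ← Set.preimage_univ (f := f), hf.measure_preimage MeasurableSet.univ.nullMeasurableSet]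
    simp⟩
  margX a b ha _ hb := by
    rw [Measure.map_apply (hf.measurable.prodMk hg.measurable)
      (measurableSet_Icc.prod measurableSet_Icc)]
    exact measure_preimage_Icc_inter hf hg ha hb
  margY a b ha _ hb := by
    rw [Measure.map_apply (hf.measurable.prodMk hg.measurable)
      (measurableSet_Icc.prod measurableSet_Icc), ← measure_preimage_Icc_inter hg hf ha hb,
      Set.inter_comm]
    rfl

theorem pdens_ofMeasurePreserving [IsFiniteMeasure P]
    (hf : MeasurePreserving f P (volume.restrict (Set.Icc 0 1)))
    (hg : MeasurePreserving g P (volume.restrict (Set.Icc 0 1))) {k : ℕ}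
    (τ : Equiv.Perm (Fin k)) :
    pdens τ (ofMeasurePreserving hf hg) =
      k.factorial * (Measure.pi fun _ => P).real {w | InducesPattern τ (f ∘ w) (g ∘ w)} := by
  have hfg : MeasurePreserving (fun ω => (f ω, g ω)) P (P.map fun ω => (f ω, g ω)) :=
    (hf.measurable.prodMk hg.measurable).measurePreserving P
  have hpattern : MeasurableSet
      {z : Fin k → ℝ × ℝ | InducesPattern τ (fun i => (z i).1) fun i => (z i).2} :=
    measurableSet_inducesPattern τ (by fun_prop) (by fun_prop)
  exact congrArg (fun x : ENNReal => (k.factorial : ℝ) * x.toReal)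
    ((measurePreserving_pi _ _ fun _ => hfg).measure_preimage hpattern.nullMeasurableSet).symm

end OfMeasurePreserving

attribute [local instance] Measure.Subtype.measureSpace

instance : IsProbabilityMeasure (volume : Measure (Set.Ico (0 : ℝ) 1)) :=
  ⟨by simp [Measure.Subtype.volume_univ measurableSet_Ico.nullMeasurableSet]⟩

/-- The point at relative position `w.2` of the `w.1`-th of `n` equal subintervals of `[0,1)`. -/
noncomputable def blockPoint (n : ℕ) (w : Fin n × Set.Ico (0 : ℝ) 1) : ℝ :=
  ((w.1 : ℝ) + w.2) / n

variable {k n : ℕ}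

theorem strictMono_blockPoint :
    StrictMono fun w : Fin n ×ₗ Set.Ico (0 : ℝ) 1 => blockPoint n (ofLex w) := by
  intro v w hvw
  have hn : (0 : ℝ) < n := mod_cast (ofLex v).1.pos
  refine div_lt_div_of_pos_right ?_ hn
  rcases Prod.Lex.lt_iff.1 hvw with hlt | ⟨heq, hlt⟩
  · have : ((ofLex v).1 : ℝ) + 1 ≤ (ofLex w).1 := mod_cast hlt
    linarith [(ofLex v).2.2.2, (ofLex w).2.2.1]
  · rw [heq]
    exact add_lt_add_right (Subtype.coe_lt_coe.2 hlt) _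

theorem measurable_blockPoint : Measurable (blockPoint n) :=
  (((measurable_of_countable fun b : Fin n => (b : ℝ)).comp measurable_fst).add
    (measurable_subtype_coe.comp measurable_snd)).div_const _

theorem uniformOn_univ_fin_singleton (b : Fin n) :
    uniformOn (Set.univ : Set (Fin n)) {b} = (n : ENNReal)⁻¹ := by
  simp [uniformOn_univ]

theorem inducesPattern_blockPoint_iff (τ : Equiv.Perm (Fin k)) (σ : Equiv.Perm (Fin n))
    (w : Fin k → Fin n × Set.Ico (0 : ℝ) 1) :
    InducesPattern τ (fun i => blockPoint n (w i)) (fun i => blockPoint n (σ (w i).1, (w i).2)) ↔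
      InducesInInflation τ σ w :=
  inducesPattern_comp_iff τ strictMono_blockPoint strictMono_blockPoint

theorem measurableSet_inducesInInflation (τ : Equiv.Perm (Fin k)) (σ : Equiv.Perm (Fin n)) :
    MeasurableSet {w : Fin k → Fin n × Set.Ico (0 : ℝ) 1 | InducesInInflation τ σ w} := by
  have hσ : Measurable fun w : Fin n × Set.Ico (0 : ℝ) 1 => (σ w.1, w.2) :=
    (measurable_of_countable σ).prodMap measurable_id
  simp only [← inducesPattern_blockPoint_iff]
  exact measurableSet_inducesPattern τ (fun i => measurable_blockPoint.comp (measurable_pi_apply i))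
    fun i => (measurable_blockPoint.comp hσ).comp (measurable_pi_apply i)

theorem volume_preimage_blockPoint (b : Fin n) {S : Set ℝ} (hS : MeasurableSet S) :
    volume (Prod.mk b ⁻¹' (blockPoint n ⁻¹' S)) =
      volume (Set.Ico (b : ℝ) (b + 1) ∩ (· / (n : ℝ)) ⁻¹' S) := by
  let T : Set ℝ := (fun x => (b + x) / n) ⁻¹' S
  have hT : MeasurableSet T := (measurable_id.const_add _).div_const _ hS
  calc
    volume (Prod.mk b ⁻¹' (blockPoint n ⁻¹' S)) = volume (T ∩ Set.Ico 0 1) :=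
      volume_preimage_coe measurableSet_Ico.nullMeasurableSet hT
    _ = volume (((b : ℝ) + ·) ⁻¹' (Set.Ico (b : ℝ) (b + 1) ∩ (· / (n : ℝ)) ⁻¹' S)) := by
      rw [Set.preimage_inter, Set.preimage_const_add_Ico, sub_self, add_sub_cancel_left,
        Set.inter_comm]
      rfl
    _ = volume (Set.Ico (b : ℝ) (b + 1) ∩ (· / (n : ℝ)) ⁻¹' S) := measure_preimage_add _ _ _

/-- The uniform distribution on the points of the inflation of a permutation of order `n` by
increasing segments, encoded by column and position. -/
noncomputable def blockMeasure (n : ℕ) : Measure (Fin n × Set.Ico (0 : ℝ) 1) :=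
  (uniformOn Set.univ).prod volume

theorem measurePreserving_permute_columns (σ : Equiv.Perm (Fin n)) :
    MeasurePreserving (fun w : Fin n × Set.Ico (0 : ℝ) 1 => (σ w.1, w.2)) (blockMeasure n)
      (blockMeasure n) :=
  (measurePreserving_perm_uniformOn σ).prod (.id volume)

theorem pi_blockMeasure_eq_sum {S : Set (Fin k → Fin n × Set.Ico (0 : ℝ) 1)}
    (hS : MeasurableSet S) :
    Measure.pi (fun _ => blockMeasure n) S =
      ∑ b : Fin k → Fin n, volume ((fun (u : Fin k → Set.Ico (0 : ℝ) 1) i => (b i, u i)) ⁻¹' S) *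
        (n : ENNReal)⁻¹ ^ k := by
  let e := MeasurableEquiv.arrowProdEquivProdArrow (Fin n) (Set.Ico (0 : ℝ) 1) (Fin k)
  have he : MeasurePreserving e.symm ((Measure.pi fun _ => uniformOn Set.univ).prod volume)
      (Measure.pi fun _ => blockMeasure n) :=
    (measurePreserving_arrowProdEquivProdArrow (Fin n) (Set.Ico (0 : ℝ) 1) (Fin k)
      (fun _ => uniformOn Set.univ) fun _ => volume).symm
  rw [← he.measure_preimage_equiv, Measure.prod_apply (e.symm.measurable hS), lintegral_fintype]
  simp only [Measure.pi_singleton, uniformOn_univ_fin_singleton, Finset.prod_const,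
    Finset.card_univ, Fintype.card_fin]
  rfl

variable [NeZero n]

instance : IsProbabilityMeasure (blockMeasure n) := by
  unfold blockMeasure; infer_instance

theorem measurePreserving_blockPoint :
    MeasurePreserving (blockPoint n) (blockMeasure n) (volume.restrict (Set.Icc 0 1)) := by
  have hn : (0 : ℝ) < n := mod_cast Nat.pos_of_ne_zero (NeZero.ne n)
  refine ⟨measurable_blockPoint, Measure.ext fun S hS => ?_⟩
  have hscale : MeasurableSet ((· / (n : ℝ)) ⁻¹' S) := measurable_id.div_const _ hS
  have hIco : Set.Ico (0 : ℝ) n = (· / (n : ℝ)) ⁻¹' Set.Ico 0 1 := by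
    ext x
    simp only [Set.mem_preimage, Set.mem_Ico, le_div_iff₀ hn, div_lt_one hn, zero_mul]
  calc
    (blockMeasure n).map (blockPoint n) S
      = ∑ b : Fin n, volume (Set.Ico (b : ℝ) (b + 1) ∩ (· / (n : ℝ)) ⁻¹' S) * (n : ENNReal)⁻¹ := by
      rw [Measure.map_apply measurable_blockPoint hS, blockMeasure,
        Measure.prod_apply (measurable_blockPoint hS), lintegral_fintype]
      simp only [volume_preimage_blockPoint _ hS, uniformOn_univ_fin_singleton]
    _ = volume ((· * (n : ℝ)⁻¹) ⁻¹' (Set.Ico 0 1 ∩ S)) * (n : ENNReal)⁻¹ := by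
      rw [← Finset.sum_mul, sum_volume_fin_Ico_inter n hscale, hIco, ← Set.preimage_inter]
      rfl
    _ = volume (Set.Ico 0 1 ∩ S) := by
      rw [Real.volume_preimage_mul_right (inv_ne_zero hn.ne'), inv_inv, Nat.abs_cast,
        ENNReal.ofReal_natCast, mul_right_comm, ENNReal.mul_inv_cancel (by simpa using NeZero.ne n)
        (by simp), one_mul]
    _ = volume.restrict (Set.Icc 0 1) S := by
      rw [← restrict_Ico_eq_restrict_Icc, Measure.restrict_apply hS, Set.inter_comm]

/-- The permuton obtained from the diagram of `σ` by replacing each point with an increasing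
segment. -/
noncomputable def ofPerm (σ : Equiv.Perm (Fin n)) : Permuton :=
  ofMeasurePreserving (measurePreserving_blockPoint (n := n))
    (measurePreserving_blockPoint.comp (measurePreserving_permute_columns σ))

theorem pdens_ofPerm (τ : Equiv.Perm (Fin k)) (σ : Equiv.Perm (Fin n)) :
    pdens τ (ofPerm σ) =
      k.factorial * (Measure.pi fun _ => blockMeasure n).real {w | InducesInInflation τ σ w} := by
  simp only [← inducesPattern_blockPoint_iff]
  exact pdens_ofMeasurePreserving _ _ τ

theorem pdens_ofPerm_congr (τ : Equiv.Perm (Fin k)) {σ σ' : Equiv.Perm (Fin n)}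
    (h : ∀ T : Fin k → Fin k → Ordering × Ordering, cmpTableCount σ T = cmpTableCount σ' T) :
    pdens τ (ofPerm σ) = pdens τ (ofPerm σ') := by
  obtain ⟨e, he⟩ := exists_equiv_cmpTable_eq h
  have hsum : Measure.pi (fun _ => blockMeasure n) {w | InducesInInflation τ σ w} =
      Measure.pi (fun _ => blockMeasure n) {w | InducesInInflation τ σ' w} := by
    rw [pi_blockMeasure_eq_sum (measurableSet_inducesInInflation _ _),
      pi_blockMeasure_eq_sum (measurableSet_inducesInInflation _ _)]
    refine Fintype.sum_equiv e _ _ fun b => ?_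
    simp only [Set.preimage_ofPred_eq, inducesInInflation_congr τ (he b)]
  rw [pdens_ofPerm, pdens_ofPerm, measureReal_def, measureReal_def, hsum]

theorem pdens_ofPerm_self_ne_zero (σ : Equiv.Perm (Fin n)) : pdens σ (ofPerm σ) ≠ 0 := by
  have hsub : Set.univ.pi (fun i => ({i} : Set (Fin n)) ×ˢ (Set.univ : Set (Set.Ico (0 : ℝ) 1))) ⊆
      {w | InducesInInflation σ σ w} := by
    intro w hw
    have hw' : w = fun i => (i, (w i).2) := funext fun i => Prod.ext (hw i trivial).1 rfl
    rw [hw']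
    exact inducesInInflation_self σ _
  have hpos : Measure.pi (fun _ => blockMeasure n)
      (Set.univ.pi fun i => ({i} : Set (Fin n)) ×ˢ (Set.univ : Set (Set.Ico (0 : ℝ) 1))) ≠ 0 := by
    simp [Measure.pi_pi, blockMeasure, Measure.prod_prod, uniformOn_univ_fin_singleton]
  rw [pdens_ofPerm]
  exact mul_ne_zero (mod_cast n.factorial_ne_zero)
    ((measureReal_ne_zero_iff).2 fun h => hpos (measure_mono_null hsub h))

theorem pdens_ofPerm_eq_zero {σ σ' : Equiv.Perm (Fin n)} (hσ : SuccessionFree σ) (hne : σ ≠ σ') :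
    pdens σ (ofPerm σ') = 0 := by
  rw [pdens_ofPerm, Set.eq_empty_of_forall_notMem (s := {w | InducesInInflation σ σ' w})
    fun w hw => hne (hσ.eq_of_inducesInInflation hw), measureReal_empty, mul_zero]

end Permuton

/-- **Lemma (independence).** For every finite set of permutations
`𝒜 = {τ_1,…,τ_k}`, there exist a permutation `τ` and permutons `Φ` and `Φ'` such
that `t(τ_i,Φ) = t(τ_i,Φ')` for every `i ∈ [k]` while `t(τ,Φ) ≠ t(τ,Φ')`. -/
theorem exists_distinguishing_pattern (k : ℕ) (A : Fin k → Perms) :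
    ∃ (τ : Perms) (Φ Φ' : Permuton),
      (∀ i : Fin k, permutonDens (A i) Φ = permutonDens (A i) Φ') ∧
      permutonDens τ Φ ≠ permutonDens τ Φ' := by
  obtain ⟨m, π, π', hne, hcount⟩ :=
    exists_ne_cmpTableCount_inflateDescents_eq fun i => (A i).1
  have : NeZero (m * 2) := ⟨by
    intro hm
    obtain rfl : m = 0 := by lia
    exact hne (Subsingleton.elim π π')⟩
  refine ⟨⟨m * 2, inflateDescents π⟩, .ofPerm (inflateDescents π), .ofPerm (inflateDescents π'),
    fun i => Permuton.pdens_ofPerm_congr _ (hcount i), fun heq => ?_⟩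
  exact Permuton.pdens_ofPerm_self_ne_zero _ <| heq.trans <|
    Permuton.pdens_ofPerm_eq_zero (successionFree_inflateDescents π)
      (inflateDescents_injective.ne hne)
end

section
/- Let τ be a non-trivial indecomposable permutation of order k, let σ be a permutation of order n ≥ k, and let p = (p_1,…,p_n) be positive reals with Σ_{i∈[n]} p_i ≤ 1. Then the step-up permuton Φ_σ^p satisfies t(τ,Φ_σ^p) = k! · Σ_{𝒫 ∈ R(τ)} Σ_{ψ ∈ Occ(τ/𝒫, σ)} Π_{i=1}^{|𝒫|} p_{ψ(i)}^{|P_i|} / |P_i|!, where the outer sum is over all τ-compressive partitions 𝒫 = (P_1,…,P_{|𝒫|}). -/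
open MeasureTheory

/-- An ordered partition `𝒫 = (P_1,…,P_ℓ)` of `[k]` into consecutive intervals,
encoded by the sequence of sizes of its parts: the `i`-th part is the interval
`[off i, off i + s i)`. -/
structure Comp (k : ℕ) where
  len : ℕ
  s : Fin len → ℕ
  pos : ∀ i, 0 < s i
  total : ∑ i, s i = k

namespace Comp

/-- The left endpoint of the `i`-th part. -/
def off {k : ℕ} (c : Comp k) (i : Fin c.len) : ℕ :=
  ∑ j ∈ Finset.univ.filter (fun j => j < i), c.s j

lemma off_add_le {k : ℕ} (c : Comp k) (i : Fin c.len) : c.off i + c.s i ≤ k := by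
  classical
  have h : c.off i + c.s i ≤ ∑ j, c.s j := by
    rw [off]
    have h1 : ∑ j ∈ Finset.univ.filter (fun j => j < i), c.s j + c.s i
        = ∑ j ∈ insert i (Finset.univ.filter (fun j => j < i)), c.s j := by
      rw [Finset.sum_insert (by simp)]
      omega
    rw [h1]
    exact Finset.sum_le_sum_of_subset (Finset.subset_univ _)
  rw [c.total] at h
  exact h

lemma off_lt {k : ℕ} (c : Comp k) (i : Fin c.len) : c.off i < k := by
  have h1 := c.off_add_le i
  have h2 := c.pos i
  omega

/-- The representative (left endpoint) of the `i`-th part, as an element of `Fin k`. -/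
def rep {k : ℕ} (c : Comp k) (i : Fin c.len) : Fin k := ⟨c.off i, c.off_lt i⟩

/-- `a` lies in the `i`-th part `P_i`. -/
def mem {k : ℕ} (c : Comp k) (i : Fin c.len) (a : Fin k) : Prop :=
  c.off i ≤ (a : ℕ) ∧ (a : ℕ) < c.off i + c.s i

end Comp

/-- `c` is a `τ`-compressive partition: on each part `P_i` the permutation `τ`
acts as a shift `a ↦ a + c_i` (equivalently, `τ a + b = τ b + a` for all
`a, b ∈ P_i`). -/
def IsCompressive {k : ℕ} (τ : Equiv.Perm (Fin k)) (c : Comp k) : Prop :=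
  ∀ i : Fin c.len, ∀ a b : Fin k, c.mem i a → c.mem i b →
    (τ a : ℕ) + (b : ℕ) = (τ b : ℕ) + (a : ℕ)

/-- `ψ` is an occurrence of the quotient permutation `τ/𝒫` (determined by the
representatives of the parts of the `τ`-compressive partition `c`) in `σ`:
a strictly increasing map matching the pattern of `τ` on the representatives. -/
def IsOccQuot {k n : ℕ} (τ : Equiv.Perm (Fin k)) (c : Comp k)
    (σ : Equiv.Perm (Fin n)) (ψ : Fin c.len → Fin n) : Prop :=
  StrictMono ψ ∧
    ∀ i j : Fin c.len, τ (c.rep i) < τ (c.rep j) ↔ σ (ψ i) < σ (ψ j)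

/-- The left endpoint `a_{i-1} = v_1 + … + v_{i-1}` of the `i`-th segment. -/
noncomputable def segA {n : ℕ} (v : Fin n → ℝ) (i : Fin n) : ℝ :=
  ∑ j ∈ Finset.univ.filter (fun j => j < i), v j

/-- The height `b_i = Σ_{j : σ(j) < σ(i)} v_j` of the `i`-th segment. -/
noncomputable def segB {n : ℕ} (σ : Equiv.Perm (Fin n)) (v : Fin n → ℝ)
    (i : Fin n) : ℝ :=
  ∑ j ∈ Finset.univ.filter (fun j => σ j < σ i), v j

/-- The step-up permuton `Φ_σ^v` of a permutation `σ` with weights `v`: uniform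
measure on the diagonal segments from `(a_{i-1}, b_i)` to `(a_i, b_i + v_i)`,
together with the diagonal segment from `(Σ v_j, Σ v_j)` to `(1,1)`. -/
noncomputable def stepUp {n : ℕ} (σ : Equiv.Perm (Fin n)) (v : Fin n → ℝ) :
    Measure (ℝ × ℝ) :=
  (∑ i : Fin n, (volume.restrict (Set.Icc (segA v i) (segA v i + v i))).map
      (fun x : ℝ => (x, x - segA v i + segB σ v i)))
  + (volume.restrict (Set.Icc (∑ j, v j) 1)).map (fun x : ℝ => (x, x))

/-!
Sample `k` points of the permuton and let `F a` be the segment of the `a`-th point from the left.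
Points on a common segment are increasing and the vertical order of points on different segments is
that of the segments, so whether the pattern is `τ` depends only on `F`. The tuples with a given
monotone `F` have volume `∏ i, p i ^ m i / (m i)!`, where `m i` is the size of the fiber of `F` over
`i`: the permutations of `Fin k` that fix `F` carry them onto almost all of the box of volume
`∏ a, p (F a)`.

If `F` yields the pattern `τ`, no point lies vertically between two consecutive points of a segment,
because it would lie on that segment, hence horizontally between them as well. So `τ` is a shift on
each fiber of `F`, the fibers form a `τ`-compressive partition, and `F` induces an occurrence of the
quotient in `σ`. If a point were on the last diagonal segment, which is above and to the right of
all others, then so would be all points from some position `1 ≤ m < k` on, and `τ` would decompose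
at `m`.
-/

open scoped Finset Nat

section Slots

variable {ι M : Type*} [Fintype ι] [LinearOrder ι] [AddCommMonoid M]

/-- The left endpoint of the interval that belongs to `i` when intervals of lengths `v` are laid
out from `0` in the order of their indices. -/
def leftEnd (v : ι → M) (i : ι) : M := ∑ j with j < i, v j

/-- The half-open interval that belongs to `i` when intervals of lengths `v` are laid out from `0`
in the order of their indices. -/
def slot [Preorder M] (v : ι → M) (i : ι) : Set M := Set.Ico (leftEnd v i) (leftEnd v i + v i)

variable {v : ι → M} {i j : ι}

lemma leftEnd_add_self (v : ι → M) (i : ι) : leftEnd v i + v i = ∑ j with j ≤ i, v j := by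
  have h : ({j | j ≤ i} : Finset ι) = insert i ({j | j < i} : Finset ι) := by
    ext j
    simp [le_iff_eq_or_lt]
  rw [h, Finset.sum_insert (by simp), leftEnd, add_comm]

variable [LinearOrder M]

lemma exists_mem_slot {x : M} (h0 : 0 ≤ x) (hx : x < ∑ i, v i) : ∃ i, x ∈ slot v i := by
  have hne : (Finset.univ : Finset ι).Nonempty :=
    Finset.nonempty_of_sum_ne_zero (h0.trans_lt hx).ne'
  -- `x` lies in the interval of the first index whose right endpoint exceeds `x`.
  obtain ⟨i, hi⟩ := (Set.toFinite {i | x < leftEnd v i + v i}).exists_minimal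
    ⟨Finset.univ.max' hne, by
      simpa [leftEnd_add_self, Finset.filter_true_of_mem, Finset.le_max'] using hx⟩
  refine ⟨i, ?_, hi.prop⟩
  rcases ({j | j < i} : Finset ι).eq_empty_or_nonempty with hempty | hnonempty
  · rwa [leftEnd, hempty, Finset.sum_empty]
  · obtain ⟨l, hl⟩ := Finset.exists_maximal hnonempty
    have hli : l < i := (Finset.mem_filter.mp hl.prop).2
    have hend : leftEnd v i = leftEnd v l + v l := by
      rw [leftEnd_add_self, leftEnd]
      congr 1
      ext j
      simp only [Finset.mem_filter_univ]
      exact ⟨fun h => not_lt.mp fun hlj => hl.not_prop_of_gt hlj ((Finset.mem_filter_univ j).mpr h),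
        fun h => h.trans_lt hli⟩
    rw [hend]
    exact not_lt.mp fun hlt => (hi.not_prop_of_lt hli) hlt

variable [IsOrderedAddMonoid M]

lemma leftEnd_nonneg (hv : ∀ i, 0 ≤ v i) (i : ι) : 0 ≤ leftEnd v i :=
  Finset.sum_nonneg fun j _ => hv j

lemma leftEnd_add_le_leftEnd (hv : ∀ i, 0 ≤ v i) (h : i < j) :
    leftEnd v i + v i ≤ leftEnd v j := by
  rw [leftEnd_add_self]
  exact Finset.sum_le_sum_of_subset_of_nonneg
    (Finset.monotone_filter_right _ fun _ _ hl => hl.trans_lt h) fun l _ _ => hv l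

lemma leftEnd_add_le_sum (hv : ∀ i, 0 ≤ v i) (i : ι) : leftEnd v i + v i ≤ ∑ j, v j := by
  rw [leftEnd_add_self]
  exact Finset.sum_le_sum_of_subset_of_nonneg (Finset.subset_univ _) fun l _ _ => hv l

lemma lt_of_mem_slot (hv : ∀ i, 0 ≤ v i) (h : i < j) {x y : M} (hx : x ∈ slot v i)
    (hy : y ∈ slot v j) : x < y :=
  hx.2.trans_le ((leftEnd_add_le_leftEnd hv h).trans hy.1)

lemma le_of_mem_slot (hv : ∀ i, 0 ≤ v i) {x y : M} (hxy : x ≤ y) (hx : x ∈ slot v i)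
    (hy : y ∈ slot v j) : i ≤ j :=
  not_lt.mp fun h => (lt_of_mem_slot hv h hy hx).not_ge hxy

lemma eq_of_mem_slot (hv : ∀ i, 0 ≤ v i) {x : M} (hx : x ∈ slot v i) (hy : x ∈ slot v j) :
    i = j :=
  (le_of_mem_slot hv le_rfl hx hy).antisymm (le_of_mem_slot hv le_rfl hy hx)

lemma pairwise_disjoint_slot (hv : ∀ i, 0 ≤ v i) :
    Pairwise (Function.onFun Disjoint (slot v)) := fun _ _ hij =>
  Set.disjoint_left.mpr fun _ hx hy => hij (eq_of_mem_slot hv hx hy)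

lemma iUnion_slot (hv : ∀ i, 0 ≤ v i) : ⋃ i, slot v i = Set.Ico 0 (∑ i, v i) := by
  ext x
  refine ⟨fun hx => ?_, fun hx => Set.mem_iUnion.mpr (exists_mem_slot hx.1 hx.2)⟩
  obtain ⟨i, hi⟩ := Set.mem_iUnion.mp hx
  exact ⟨(leftEnd_nonneg hv i).trans hi.1, hi.2.trans_le (leftEnd_add_le_sum hv i)⟩

end Slots

/-! ### Increasing tuples in a product of consecutive intervals -/

section IncreasingTuples

variable {ι κ : Type*}

/-- The volume of the tuples `x : κ → ℝ` that are increasing for some order on `κ` and satisfy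
`x a ∈ I (F a)`, where `I i` are consecutive intervals of lengths `v i`: the coordinates assigned
to `i` contribute a simplex. -/
noncomputable def fiberWeight [Fintype ι] (v : ι → ℝ) (F : κ → ι) : ℝ :=
  ∏ i, v i ^ Nat.card {a // F a = i} / (Nat.card {a // F a = i})!

lemma fiberWeight_nonneg [Fintype ι] {v : ι → ℝ} (hv : ∀ i, 0 ≤ v i) (F : κ → ι) :
    0 ≤ fiberWeight v F :=
  Finset.prod_nonneg fun i _ => div_nonneg (pow_nonneg (hv i) _) (Nat.cast_nonneg _)

lemma fiberWeight_comp_of_injective {ι' : Type*} [Fintype ι] [Fintype ι'] {e : ι' → ι}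
    (he : e.Injective) (v : ι → ℝ) (F : κ → ι') :
    fiberWeight v (e ∘ F) = fiberWeight (v ∘ e) F := by
  refine (Fintype.prod_of_injective e he _ _ (fun i hi => ?_) fun i => ?_).symm
  · have hempty : IsEmpty {a // (e ∘ F) a = i} := ⟨fun a => hi ⟨F a, a.2⟩⟩
    rw [Nat.card_of_isEmpty, pow_zero, Nat.factorial_zero, Nat.cast_one, div_one]
  · simp only [Function.comp_apply, he.eq_iff]

lemma prod_comp_div_card_stabilizer [Fintype ι] [Fintype κ] (v : ι → ℝ) (F : κ → ι) :
    (∏ a, v (F a)) / Nat.card {g : Equiv.Perm κ // F ∘ g = F} = fiberWeight v F := by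
  classical
  have hprod : ∏ a, v (F a) = ∏ i, v i ^ Nat.card {a // F a = i} := by
    rw [← Fintype.prod_fiberwise' F v]
    simp only [Finset.prod_const, Finset.card_univ, Nat.card_eq_fintype_card]
  simp only [fiberWeight, hprod, Nat.card_eq_fintype_card, DomMulAct.stabilizer_card,
    Nat.cast_prod, Finset.prod_div_distrib]

lemma ae_injective [Fintype κ] : ∀ᵐ x : κ → ℝ, Function.Injective x := by
  classical
  have hne : ∀ a b : κ, a ≠ b → ∀ᵐ x : κ → ℝ, x a ≠ x b := fun a b hab => by
    let L := (LinearMap.proj a : (κ → ℝ) →ₗ[ℝ] ℝ) - LinearMap.proj b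
    have hker : {x : κ → ℝ | ¬ x a ≠ x b} = LinearMap.ker L := by
      ext x
      simp [L, sub_eq_zero]
    rw [ae_iff, hker]
    refine Measure.addHaar_submodule volume _ fun htop => ?_
    have : Pi.single a 1 ∈ LinearMap.ker L := htop ▸ Submodule.mem_top
    simp [L, hab.symm] at this
  have hall : ∀ᵐ x : κ → ℝ, ∀ a b, a ≠ b → x a ≠ x b :=
    ae_all_iff.mpr fun a => ae_all_iff.mpr fun b => Filter.eventually_imp_distrib_left.mpr (hne a b)
  filter_upwards [hall] with x hx a b
  exact not_imp_not.mp (hx a b)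

lemma measurePreserving_comp_perm [Fintype κ] (g : Equiv.Perm κ) :
    MeasurePreserving (fun x : κ → ℝ => x ∘ g) :=
  volume_preserving_arrowCongr' g.symm (.refl ℝ) (.id _)

variable {k : ℕ}

/-- The increasing tuples whose coordinate `a` lies in the set `I (F a)`. -/
def increasingIn (I : ι → Set ℝ) (F : Fin k → ι) : Set (Fin k → ℝ) :=
  {x | (∀ a, x a ∈ I (F a)) ∧ StrictMono x}

variable {I : ι → Set ℝ}

lemma measurableSet_increasingIn (hI : ∀ i, MeasurableSet (I i)) (F : Fin k → ι) :
    MeasurableSet (increasingIn I F) := by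
  refine measurableSet_setOfPred.mpr
    (.and (.forall fun a => ?_) (.forall fun a => .forall fun b => ?_))
  · exact (hI (F a)).mem.comp (measurable_pi_apply a)
  · exact measurable_const.imp
      (measurableSet_lt (measurable_pi_apply a) (measurable_pi_apply b)).mem

lemma eq_of_comp_mem_increasingIn {F : Fin k → ι} {x : Fin k → ℝ} {g g' : Equiv.Perm (Fin k)}
    (hg : x ∘ g ∈ increasingIn I F) (hg' : x ∘ g' ∈ increasingIn I F) : g = g' := by
  have hcomp : x ∘ g = x ∘ g' := Tuple.unique_monotone hg.2.monotone hg'.2.monotone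
  have hinj : x.Injective := (g.injective_comp x).mp hg.2.injective
  exact DFunLike.coe_injective (hinj.comp_left hcomp)

variable [LinearOrder ι]

lemma comp_sort_eq (hI : ∀ i j, i < j → ∀ x ∈ I i, ∀ y ∈ I j, x < y) {F : Fin k → ι}
    (hF : Monotone F) {x : Fin k → ℝ} (hx : ∀ a, x a ∈ I (F a)) : F ∘ Tuple.sort x = F := by
  have hmono : Monotone (F ∘ Tuple.sort x) := fun a b hab => not_lt.mp fun hlt =>
    (hI _ _ hlt _ (hx _) _ (hx _)).not_ge (Tuple.monotone_sort x hab)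
  exact Tuple.unique_monotone (τ := 1) hmono hF

lemma exists_comp_mem_increasingIn_iff (hI : ∀ i j, i < j → ∀ x ∈ I i, ∀ y ∈ I j, x < y)
    {F : Fin k → ι} (hF : Monotone F) {x : Fin k → ℝ} (hx : x.Injective) :
    (∃ g : {g : Equiv.Perm (Fin k) // F ∘ g = F}, x ∘ g.1 ∈ increasingIn I F) ↔
      ∀ a, x a ∈ I (F a) := by
  constructor
  · rintro ⟨⟨g, hg⟩, hmem, -⟩ a
    have := hmem (g.symm a)
    rw [← congrFun hg (g.symm a)] at this
    simpa using this
  · intro hmem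
    have hsort := comp_sort_eq hI hF hmem
    refine ⟨⟨Tuple.sort x, hsort⟩, fun a => ?_,
      (Tuple.monotone_sort x).strictMono_of_injective (hx.comp (Tuple.sort x).injective)⟩
    rw [← congrFun hsort a]
    exact hmem _

/-- The permutations that fix `F` carry the increasing tuples onto almost all of the box, each
tuple exactly once. -/
lemma card_mul_volume_increasingIn (hI : ∀ i j, i < j → ∀ x ∈ I i, ∀ y ∈ I j, x < y)
    (hmeas : ∀ i, MeasurableSet (I i)) {F : Fin k → ι} (hF : Monotone F) :
    Nat.card {g : Equiv.Perm (Fin k) // F ∘ g = F} * volume (increasingIn I F)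
      = ∏ a, volume (I (F a)) := by
  let C (g : {g : Equiv.Perm (Fin k) // F ∘ g = F}) : Set (Fin k → ℝ) :=
    (· ∘ g.1) ⁻¹' increasingIn I F
  have hmeasF := measurableSet_increasingIn hmeas F
  have hC (g) : volume (C g) = volume (increasingIn I F) :=
    (measurePreserving_comp_perm g.1).measure_preimage hmeasF.nullMeasurableSet
  have hdisj : Pairwise (Function.onFun Disjoint C) := fun g g' hne =>
    Set.disjoint_left.mpr fun x hx hx' =>
      hne (Subtype.ext (eq_of_comp_mem_increasingIn hx hx'))
  have hbox : (⋃ g, C g) =ᵐ[volume] (Set.univ.pi fun a => I (F a)) := by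
    filter_upwards [ae_injective] with x hx
    refine propext (Set.mem_iUnion.trans ?_)
    exact (exists_comp_mem_increasingIn_iff hI hF hx).trans Set.mem_univ_pi.symm
  calc _ = ∑' g, volume (C g) := by
        simp only [hC, tsum_fintype, Finset.sum_const, nsmul_eq_mul, Finset.card_univ,
          Nat.card_eq_fintype_card]
    _ = volume (⋃ g, C g) := (measure_iUnion hdisj fun g =>
        (measurePreserving_comp_perm g.1).measurable hmeasF).symm
    _ = _ := by rw [measure_congr hbox, volume_pi_pi]

lemma volume_increasingIn_slot [Fintype ι] {v : ι → ℝ} (hv : ∀ i, 0 ≤ v i) {F : Fin k → ι}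
    (hF : Monotone F) :
    volume (increasingIn (slot v) F) = ENNReal.ofReal (fiberWeight v F) := by
  have h := card_mul_volume_increasingIn (I := slot v)
    (fun i j hij x hx y hy => lt_of_mem_slot hv hij hx hy) (fun _ => measurableSet_Ico) hF
  have : Nonempty {g : Equiv.Perm (Fin k) // F ∘ g = F} := ⟨⟨1, rfl⟩⟩
  have hpos : 0 < Nat.card {g : Equiv.Perm (Fin k) // F ∘ g = F} := Nat.card_pos
  simp only [slot, Real.volume_Ico, add_sub_cancel_left] at h
  rw [← prod_comp_div_card_stabilizer, ENNReal.ofReal_div_of_pos (by exact_mod_cast hpos),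
    ENNReal.ofReal_natCast, ENNReal.eq_div_iff (by exact_mod_cast hpos.ne')
      (ENNReal.natCast_ne_top _), ENNReal.ofReal_prod_of_nonneg fun a _ => hv _]
  exact h

end IncreasingTuples

/-! ### Interval partitions and monotone maps -/

namespace Comp

variable {k : ℕ} (c : Comp k)

lemma exists_mem (a : Fin k) : ∃ i, c.mem i a :=
  exists_mem_slot (v := c.s) a.1.zero_le (a.2.trans_eq c.total.symm)

/-- The index of the part that contains `a`. -/
noncomputable def part (a : Fin k) : Fin c.len := (c.exists_mem a).choose

lemma mem_part (a : Fin k) : c.mem (c.part a) a := (c.exists_mem a).choose_spec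

variable {c}

lemma part_eq_iff {i : Fin c.len} {a : Fin k} : c.part a = i ↔ c.mem i a :=
  ⟨fun h => h ▸ c.mem_part a, fun h => eq_of_mem_slot (fun _ => Nat.zero_le _) (c.mem_part a) h⟩

variable (c)

lemma monotone_part : Monotone c.part := fun a b hab =>
  le_of_mem_slot (fun _ => Nat.zero_le _) (Fin.le_iff_val_le_val.mp hab) (c.mem_part a)
    (c.mem_part b)

lemma part_rep (i : Fin c.len) : c.part (c.rep i) = i :=
  part_eq_iff.mpr ⟨le_rfl, Nat.lt_add_of_pos_right (c.pos i)⟩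

lemma part_surjective : c.part.Surjective := fun i => ⟨c.rep i, c.part_rep i⟩

lemma rep_strictMono : StrictMono c.rep := fun i j hij => not_le.mp fun h =>
  hij.not_ge (by simpa only [part_rep] using c.monotone_part h)

lemma card_part_eq (i : Fin c.len) : Nat.card {a // c.part a = i} = c.s i := by
  have hfiber : ({a | c.part a = i} : Finset (Fin k)).map Fin.valEmbedding =
      Finset.Ico (c.off i) (c.off i + c.s i) := by
    ext x
    simp only [Finset.mem_map, Finset.mem_filter_univ, part_eq_iff, Fin.valEmbedding_apply,
      Finset.mem_Ico]
    exact ⟨fun ⟨_, ha, hax⟩ => hax ▸ ha, fun hx => ⟨⟨x, hx.2.trans_le (c.off_add_le i)⟩, hx, rfl⟩⟩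
  rw [Nat.card_eq_fintype_card, Fintype.card_subtype, ← Finset.card_map Fin.valEmbedding, hfiber,
    Nat.card_Ico, Nat.add_sub_cancel_left]

/-- The interval partition of `Fin k` into the fibers of a surjection onto `Fin l`, of which only
the sizes are used. -/
def ofSurjective {l : ℕ} {g : Fin k → Fin l} (hg : g.Surjective) : Comp k where
  len := l
  s i := #{a | g a = i}
  pos i := Finset.card_pos.mpr ((hg i).imp fun _ ha => by simpa using ha)
  total := by
    rw [← Finset.card_eq_sum_card_fiberwise fun _ _ => Finset.mem_univ _, Finset.card_fin]

lemma part_ofSurjective {l : ℕ} {g : Fin k → Fin l} (hg : g.Surjective) (hmono : Monotone g) :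
    (ofSurjective hg).part = g := by
  funext a
  have hsum (t : Finset (Fin l)) : ∑ i ∈ t, (ofSurjective hg).s i = #{b | g b ∈ t} :=
    Finset.sum_card_fiberwise_eq_card_filter Finset.univ t g
  have hlt : leftEnd (ofSurjective hg).s (g a) = #{b | g b < g a} :=
    (hsum {i | i < g a}).trans (by simp only [Finset.mem_filter_univ])
  have hle : leftEnd (ofSurjective hg).s (g a) + (ofSurjective hg).s (g a) = #{b | g b ≤ g a} :=
    (leftEnd_add_self _ _).trans <|
      (hsum {i | i ≤ g a}).trans (by simp only [Finset.mem_filter_univ])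
  refine part_eq_iff.mpr ⟨(not_lt.mp fun h => ?_).trans_eq' hlt.symm, hle ▸ ?_⟩
  · exact lt_irrefl _ ((Fin.lt_card_filter_univ_iff_apply_of_imp (g · < g a)
      fun _ _ hji hi => (hmono hji).trans_lt hi).mp h)
  · exact (Fin.lt_card_filter_univ_iff_apply_of_imp (g · ≤ g a)
      fun _ _ hji hi => (hmono hji).trans hi).mpr le_rfl

lemma exists_strictMono_comp_part {α : Type*} [LinearOrder α] {f : Fin k → α} (hf : Monotone f) :
    ∃ (c : Comp k) (ψ : Fin c.len → α), StrictMono ψ ∧ ψ ∘ c.part = f := by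
  let e := (Finset.univ.image f).orderIsoOfFin rfl
  let g (a : Fin k) := e.symm ⟨f a, Finset.mem_image_of_mem f (Finset.mem_univ a)⟩
  have hg : g.Surjective := fun i => by
    obtain ⟨a, -, ha⟩ := Finset.mem_image.mp (e i).2
    exact ⟨a, e.symm_apply_eq.mpr (Subtype.ext ha)⟩
  have hmono : Monotone g := fun a b hab => e.symm.monotone (Subtype.mk_le_mk.mpr (hf hab))
  refine ⟨ofSurjective hg, fun i => e i, fun i j hij => e.strictMono hij, ?_⟩
  rw [part_ofSurjective hg hmono]
  exact funext fun a => congrArg Subtype.val (e.apply_symm_apply _)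

variable {c}

lemma sigma_eq_of_comp_part_eq {α : Type*} [LinearOrder α] {c' : Comp k} {ψ : Fin c.len → α}
    {ψ' : Fin c'.len → α} (hψ : StrictMono ψ) (hψ' : StrictMono ψ')
    (h : ψ ∘ c.part = ψ' ∘ c'.part) :
    (⟨c, ψ⟩ : Σ c : Comp k, Fin c.len → α) = ⟨c', ψ'⟩ := by
  have hrange : Set.range ψ = Set.range ψ' := by
    rw [← c.part_surjective.range_comp ψ, h, c'.part_surjective.range_comp]
  have hs := c.card_part_eq
  have hs' := c'.card_part_eq
  have hlen : c.len = c'.len := by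
    rw [← Nat.card_fin c.len, ← Nat.card_fin c'.len, ← Nat.card_range_of_injective hψ.injective,
      hrange, Nat.card_range_of_injective hψ'.injective]
  generalize c.part = g at h hs
  generalize c'.part = g' at h hs'
  obtain ⟨l, s, _, _⟩ := c
  obtain ⟨l', s', _, _⟩ := c'
  obtain rfl : l = l' := hlen
  obtain rfl : ψ = ψ' := (hψ.range_inj hψ').mp hrange
  obtain rfl : g = g' := hψ.injective.comp_left h
  obtain rfl : s = s' := funext fun i => (hs i).symm.trans (hs' i)
  rfl

end Comp

/-! ### Placements of a permutation on segments -/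

lemma lt_iff_lt_of_forall_lt {α β γ : Type*} [LinearOrder α] [LinearOrder β] [LinearOrder γ]
    {f : α → β} {g : α → γ} (hf : f.Injective) (hg : g.Injective)
    (h : ∀ a b, a < b → (f a < f b ↔ g a < g b)) (a b : α) : f a < f b ↔ g a < g b := by
  rcases lt_trichotomy a b with hab | rfl | hba
  · exact h a b hab
  · simp only [lt_irrefl]
  · rw [← not_le, ← not_le, (hf.ne hba.ne).le_iff_lt, (hg.ne hba.ne).le_iff_lt, h b a hba]

lemma Indecomposable.exists_inversion {k m : ℕ} {τ : Equiv.Perm (Fin k)} (hτ : Indecomposable τ)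
    (hm : 1 ≤ m) (hmk : m < k) : ∃ a b : Fin k, (a : ℕ) < m ∧ m ≤ (b : ℕ) ∧ τ b < τ a := by
  by_contra! hno
  refine hτ ⟨m, hm, hmk, fun i => ?_⟩
  have hdown : ∀ t u : Fin k, u ≤ t → (τ.symm t : ℕ) < m → (τ.symm u : ℕ) < m :=
    fun t u hut ht => not_le.mp fun hu => by
      have htu : t ≤ u := by simpa using hno _ _ ht hu
      exact (ht.trans_le hu).ne (by rw [htu.antisymm hut])
  have hcard : #{t | (τ.symm t : ℕ) < m} = m :=
    (Finset.card_equiv (t := {a : Fin k | (a : ℕ) < m}) τ.symm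
      fun t => by simp only [Finset.mem_filter_univ]).trans <|
      Fin.card_filter_val_lt.trans (min_eq_right hmk.le)
  simpa [hcard] using Fin.lt_card_filter_univ_iff_apply_of_imp (j := τ i) _ hdown

section Placement

variable {k : ℕ} {ι : Type*} [LinearOrder ι]

/-- Points with increasing abscissae, the `a`-th of which lies on the increasing segment `F a`, form
the pattern `τ` exactly when `F` is a placement of `τ`. The segments are indexed from left to right
by `ι`, and `σ` is the permutation that gives their order from bottom to top. -/
structure IsPlacement (τ : Equiv.Perm (Fin k)) (σ : Equiv.Perm ι) (F : Fin k → ι) : Prop where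
  monotone : Monotone F
  lt_iff_le : ∀ ⦃a b⦄, a < b → (τ a < τ b ↔ σ (F a) ≤ σ (F b))

variable {τ : Equiv.Perm (Fin k)} {σ : Equiv.Perm ι}

lemma IsPlacement.ne_top [OrderTop ι] (hk : 2 ≤ k) (hτ : Indecomposable τ) (hσ : σ ⊤ = ⊤)
    {F : Fin k → ι} (hF : IsPlacement τ σ F) (a : Fin k) : F a ≠ ⊤ := fun htop => by
  obtain ⟨b, c, hb, hc, hlt⟩ := hτ.exists_inversion (le_max_left 1 (a : ℕ)) (by omega)
  have hac : a ≤ c := (le_max_right 1 (a : ℕ)).trans hc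
  have hctop : F c = ⊤ := top_unique (htop ▸ hF.monotone hac)
  refine hlt.not_gt ((hF.lt_iff_le (hb.trans_le hc)).mpr ?_)
  rw [hctop, hσ]
  exact le_top

lemma IsPlacement.covBy {F : Fin k → ι} (hF : IsPlacement τ σ F) {a b : Fin k} (hab : a ⋖ b)
    (heq : F a = F b) : τ a ⋖ τ b := by
  refine ⟨(hF.lt_iff_le hab.lt).mpr (heq ▸ le_rfl), fun t hat htb => ?_⟩
  obtain ⟨c, rfl⟩ := τ.surjective t
  rcases lt_or_gt_of_ne (ne_of_apply_ne τ hat.ne') with hca | hac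
  · have hlt : ¬ σ (F c) ≤ σ (F a) := (hF.lt_iff_le hca).not.mp hat.not_gt
    exact hlt (heq ▸ (hF.lt_iff_le (hca.trans hab.lt)).mp htb)
  · have hbc : b < c := (hab.ge_of_gt hac).lt_of_ne (ne_of_apply_ne τ htb.ne')
    have hlt : ¬ σ (F b) ≤ σ (F c) := (hF.lt_iff_le hbc).not.mp htb.not_gt
    exact hlt (heq ▸ (hF.lt_iff_le hac).mp hat)

lemma IsPlacement.val_add_val {F : Fin k → ι} (hF : IsPlacement τ σ F) {a b : Fin k}
    (heq : F a = F b) : (τ a : ℕ) + b = τ b + a := by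
  wlog hab : a ≤ b generalizing a b
  · exact (this heq.symm (le_of_not_ge hab)).symm
  have hind : ∀ l, (a : ℕ) ≤ l → ∀ hl : l < k, F a = F ⟨l, hl⟩ → (τ a : ℕ) + l = τ ⟨l, hl⟩ + a := by
    intro l hal
    induction l, hal using Nat.le_induction with
    | base => exact fun _ _ => rfl
    | succ l hal ih =>
      intro hl heq
      have hle : (⟨l, by omega⟩ : Fin k) ≤ ⟨l + 1, hl⟩ := Nat.le_succ l
      have heql : F a = F ⟨l, by omega⟩ :=
        (hF.monotone hal).antisymm ((hF.monotone hle).trans_eq heq.symm)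
      have hcov : (⟨l, by omega⟩ : Fin k) ⋖ ⟨l + 1, hl⟩ := Fin.covBy_iff.mpr (Order.covBy_add_one l)
      have hstep := Nat.covBy_iff_add_one_eq.mp
        (Fin.covBy_iff.mp (hF.covBy hcov (heql.symm.trans heq)))
      have hsum := ih (by omega) heql
      omega
  exact hind b hab b.2 heq

end Placement

section Quotient

variable {k n : ℕ} {τ : Equiv.Perm (Fin k)} {σ : Equiv.Perm (Fin n)} {c : Comp k}
  {ψ : Fin c.len → Fin n}

lemma IsCompressive.lt_of_part_eq (hc : IsCompressive τ c) {a a' b : Fin k}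
    (ha : c.part a = c.part a') (hb : c.part b ≠ c.part a) (h : τ a < τ b) : τ a' < τ b := by
  by_contra! hba'
  have haa' := hc _ a a' (c.mem_part a) (Comp.part_eq_iff.mp ha.symm)
  -- Otherwise the part contains a point with the height of `b`.
  obtain ⟨x, hxval⟩ : ∃ x : Fin k, (x : ℕ) = a + (τ b - τ a) := ⟨⟨_, by omega⟩, rfl⟩
  have hx : c.part x = c.part a :=
    ((c.monotone_part (Fin.le_iff_val_le_val.mpr (by omega))).trans_eq ha.symm).antisymm
      (c.monotone_part (Fin.le_iff_val_le_val.mpr (by omega)))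
  have hax := hc _ a x (c.mem_part a) (Comp.part_eq_iff.mp hx)
  have hτx : τ x = τ b := by omega
  exact hb (τ.injective hτx ▸ hx)

lemma IsCompressive.lt_iff_lt_of_part_eq (hc : IsCompressive τ c) {a a' b : Fin k}
    (ha : c.part a = c.part a') (hb : c.part b ≠ c.part a) : τ a < τ b ↔ τ a' < τ b :=
  ⟨hc.lt_of_part_eq ha hb, hc.lt_of_part_eq ha.symm (ha ▸ hb)⟩

lemma IsCompressive.lt_iff_rep_lt (hc : IsCompressive τ c) {a b : Fin k}
    (hab : c.part a ≠ c.part b) :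
    τ a < τ b ↔ τ (c.rep (c.part a)) < τ (c.rep (c.part b)) := by
  have ha := c.part_rep (c.part a)
  have hb := c.part_rep (c.part b)
  have hne : c.rep (c.part a) ≠ b := ne_of_apply_ne c.part (ha.trans_ne hab)
  have hne' := c.rep_strictMono.injective.ne hab
  rw [hc.lt_iff_lt_of_part_eq ha.symm hab.symm, ← not_le, (τ.injective.ne hne).symm.le_iff_lt,
    hc.lt_iff_lt_of_part_eq hb.symm (ha.trans_ne hab), not_lt,
    (τ.injective.ne hne').le_iff_lt]

lemma IsPlacement.isCompressive (h : IsPlacement τ σ (ψ ∘ c.part)) : IsCompressive τ c :=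
  fun i a b ha hb => h.val_add_val <| by
    simp only [Function.comp_apply, Comp.part_eq_iff.mpr ha, Comp.part_eq_iff.mpr hb]

lemma IsPlacement.isOccQuot (hψ : StrictMono ψ) (h : IsPlacement τ σ (ψ ∘ c.part)) :
    IsOccQuot τ c σ ψ := by
  refine ⟨hψ, lt_iff_lt_of_forall_lt (f := τ ∘ c.rep) (g := σ ∘ ψ)
    (τ.injective.comp c.rep_strictMono.injective) (σ.injective.comp hψ.injective)
    fun i j hij => (h.lt_iff_le (c.rep_strictMono hij)).trans ?_⟩
  simp only [Function.comp_apply, Comp.part_rep]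
  exact (σ.injective.ne (hψ.injective.ne hij.ne)).le_iff_lt

lemma IsOccQuot.isPlacement (hc : IsCompressive τ c) (h : IsOccQuot τ c σ ψ) :
    IsPlacement τ σ (ψ ∘ c.part) where
  monotone := h.1.monotone.comp c.monotone_part
  lt_iff_le a b hab := by
    by_cases hpart : c.part a = c.part b
    · have := hc (c.part b) a b (Comp.part_eq_iff.mp hpart) (c.mem_part b)
      exact iff_of_true (by omega) (by rw [Function.comp_apply, hpart]; rfl)
    · rw [hc.lt_iff_rep_lt hpart, h.2]
      exact (σ.injective.ne (h.1.injective.ne hpart)).le_iff_lt.symm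

/-- Occurrences in `σ` of the quotients of `τ` by its compressive partitions correspond to the
placements of `τ`: the parts are the sets of points on a common segment. -/
noncomputable def placementEquiv (τ : Equiv.Perm (Fin k)) (σ : Equiv.Perm (Fin n)) :
    (Σ c : {c : Comp k // IsCompressive τ c}, {ψ : Fin c.1.len → Fin n // IsOccQuot τ c.1 σ ψ}) ≃
      {F : Fin k → Fin n // IsPlacement τ σ F} :=
  .ofBijective (fun x => ⟨x.2.1 ∘ x.1.1.part, x.2.2.isPlacement x.1.2⟩) <| by
    constructor
    · rintro ⟨⟨c, hc⟩, ⟨ψ, hψ⟩⟩ ⟨⟨c', hc'⟩, ⟨ψ', hψ'⟩⟩ h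
      obtain ⟨rfl, hψψ'⟩ := Sigma.mk.inj_iff.mp
        (Comp.sigma_eq_of_comp_part_eq hψ.1 hψ'.1 (Subtype.mk_eq_mk.mp h))
      obtain rfl := eq_of_heq hψψ'
      rfl
    · rintro ⟨F, hF⟩
      obtain ⟨c, ψ, hψ, rfl⟩ := Comp.exists_strictMono_comp_part hF.monotone
      exact ⟨⟨⟨c, hF.isCompressive⟩, ⟨ψ, hF.isOccQuot hψ⟩⟩, rfl⟩

lemma fiberWeight_comp_part (p : Fin n → ℝ) (hψ : StrictMono ψ) :
    fiberWeight p (ψ ∘ c.part) = ∏ i, p (ψ i) ^ c.s i / (c.s i)! := by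
  rw [fiberWeight_comp_of_injective hψ.injective]
  simp only [fiberWeight, c.card_part_eq, Function.comp_apply]

lemma tsum_tsum_isOccQuot (p : Fin n → ℝ) (τ : Equiv.Perm (Fin k)) (σ : Equiv.Perm (Fin n)) :
    ∑' (c : {c : Comp k // IsCompressive τ c}),
        ∑' (ψ : {ψ : Fin c.1.len → Fin n // IsOccQuot τ c.1 σ ψ}),
          ∏ i, p (ψ.1 i) ^ c.1.s i / ((c.1.s i)! : ℝ) =
      ∑' F : {F : Fin k → Fin n // IsPlacement τ σ F}, fiberWeight p F.1 := by
  have hfinite := Finite.of_equiv _ (placementEquiv τ σ).symm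
  rw [← (placementEquiv τ σ).tsum_eq, Summable.tsum_sigma .of_finite]
  exact tsum_congr fun c => tsum_congr fun ψ => (fiberWeight_comp_part p ψ.2.1).symm

end Quotient

section WithTop

variable {k : ℕ} {ι : Type*} [LinearOrder ι] {τ : Equiv.Perm (Fin k)} {σ : Equiv.Perm ι}

lemma isPlacement_withTopCongr_iff {F : Fin k → ι} :
    IsPlacement τ σ.withTopCongr (WithTop.some ∘ F) ↔ IsPlacement τ σ F := by
  have hcoe (a b : Fin k) : σ.withTopCongr (F a) ≤ σ.withTopCongr (F b) ↔ σ (F a) ≤ σ (F b) :=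
    WithTop.coe_le_coe
  exact ⟨fun h => ⟨fun _ _ hab => WithTop.coe_le_coe.mp (h.monotone hab),
      fun a b hab => (h.lt_iff_le hab).trans (hcoe a b)⟩,
    fun h => ⟨WithTop.coe_mono.comp h.monotone,
      fun a b hab => (h.lt_iff_le hab).trans (hcoe a b).symm⟩⟩

lemma IsPlacement.exists_coe_comp_eq (hk : 2 ≤ k) (hτ : Indecomposable τ)
    {F : Fin k → WithTop ι} (hF : IsPlacement τ σ.withTopCongr F) : ∃ f, WithTop.some ∘ f = F :=
  ⟨fun a => (F a).untop (hF.ne_top hk hτ rfl a), funext fun _ => WithTop.coe_untop _ _⟩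

/-- Adding a last segment that is also the topmost adds no placement of an indecomposable
permutation. -/
noncomputable def placementWithTopEquiv (hk : 2 ≤ k) (hτ : Indecomposable τ) (σ : Equiv.Perm ι) :
    {f : Fin k → ι // IsPlacement τ σ f} ≃
      {F : Fin k → WithTop ι // IsPlacement τ σ.withTopCongr F} :=
  .ofBijective (fun f => ⟨WithTop.some ∘ f.1, isPlacement_withTopCongr_iff.mpr f.2⟩) <| by
    constructor
    · exact fun f f' h => Subtype.ext (WithTop.coe_injective.comp_left (Subtype.mk_eq_mk.mp h))
    · rintro ⟨F, hF⟩
      obtain ⟨f, rfl⟩ := hF.exists_coe_comp_eq hk hτ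
      exact ⟨⟨f, isPlacement_withTopCongr_iff.mp hF⟩, rfl⟩

lemma tsum_isPlacement_withTopCongr [Fintype ι] (hk : 2 ≤ k) (hτ : Indecomposable τ)
    (σ : Equiv.Perm ι) (v : WithTop ι → ℝ) :
    ∑' F : {F // IsPlacement τ σ.withTopCongr F}, fiberWeight v F.1 =
      ∑' f : {f // IsPlacement τ σ f}, fiberWeight (v ∘ (↑)) f.1 := by
  rw [← (placementWithTopEquiv hk hτ σ).tsum_eq]
  exact tsum_congr fun f => fiberWeight_comp_of_injective WithTop.coe_injective v f.1

end WithTop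

/-! ### Measures on increasing diagonal segments -/

section Segments

variable {ι : Type*} [Fintype ι] [LinearOrder ι]

/-- The vertical displacement from the diagonal of the segment `i`, when segments with projections
of lengths `v` are arranged in the order of `ι` from left to right and in the order of their images
under `σ` from bottom to top. -/
noncomputable def rise (σ : Equiv.Perm ι) (v : ι → ℝ) (i : ι) : ℝ :=
  leftEnd (v ∘ σ.symm) (σ i) - leftEnd v i

/-- The uniform measure on the segments arranged according to `σ`. It is `stepUp` without a
distinguished last segment and with half-open segments. -/
noncomputable def segMeasure (σ : Equiv.Perm ι) (v : ι → ℝ) : Measure (ℝ × ℝ) :=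
  ∑ i, (volume.restrict (slot v i)).map fun x => (x, x + rise σ v i)

/-- The point above `x` on the segments arranged according to `σ`. -/
noncomputable def segMap (σ : Equiv.Perm ι) (v : ι → ℝ) (x : ℝ) : ℝ × ℝ :=
  (x, x + ∑ i, (slot v i).indicator (fun _ => rise σ v i) x)

variable {σ : Equiv.Perm ι} {v : ι → ℝ}

lemma add_rise_mem_slot_iff {i : ι} {x : ℝ} :
    x + rise σ v i ∈ slot (v ∘ σ.symm) (σ i) ↔ x ∈ slot v i := by
  simp only [slot, rise, Set.mem_Ico, Function.comp_apply, Equiv.symm_apply_apply]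
  constructor <;> rintro ⟨h1, h2⟩ <;> constructor <;> linarith

lemma measurable_segMap : Measurable (segMap σ v) :=
  measurable_id.prodMk <| measurable_id.add <| Finset.measurable_fun_sum _ fun _ _ =>
    measurable_const.indicator measurableSet_Ico

lemma segMap_of_mem (hv : ∀ i, 0 ≤ v i) {i : ι} {x : ℝ} (hx : x ∈ slot v i) :
    segMap σ v x = (x, x + rise σ v i) := by
  rw [segMap, Finset.sum_eq_single i, Set.indicator_of_mem hx]
  · exact fun j _ hji => Set.indicator_of_notMem (fun hxj => hji (eq_of_mem_slot hv hxj hx)) _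
  · exact fun hi => absurd (Finset.mem_univ i) hi

lemma segMap_snd_mem_slot (hv : ∀ i, 0 ≤ v i) {i : ι} {x : ℝ} (hx : x ∈ slot v i) :
    (segMap σ v x).2 ∈ slot (v ∘ σ.symm) (σ i) := by
  rw [segMap_of_mem hv hx]
  exact add_rise_mem_slot_iff.mpr hx

lemma sum_restrict_slot (hv : ∀ i, 0 ≤ v i) (μ : Measure ℝ) :
    ∑ i, μ.restrict (slot v i) = μ.restrict (Set.Ico 0 (∑ i, v i)) := by
  rw [← Measure.sum_fintype, ← iUnion_slot hv]
  exact (Measure.restrict_iUnion (pairwise_disjoint_slot hv) fun _ => measurableSet_Ico).symm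

lemma segMeasure_eq_map (hv : ∀ i, 0 ≤ v i) :
    segMeasure σ v = (volume.restrict (Set.Ico 0 (∑ i, v i))).map (segMap σ v) := by
  rw [← sum_restrict_slot hv, ← Measure.sum_fintype, Measure.map_sum measurable_segMap.aemeasurable,
    Measure.sum_fintype, segMeasure]
  refine Finset.sum_congr rfl fun i _ => Measure.map_congr ?_
  filter_upwards [ae_restrict_mem measurableSet_Ico] with x hx
  exact (segMap_of_mem hv hx).symm

lemma fst_segMeasure (hv : ∀ i, 0 ≤ v i) :
    (segMeasure σ v).fst = volume.restrict (Set.Ico 0 (∑ i, v i)) := by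
  rw [segMeasure_eq_map hv, Measure.fst, Measure.map_map measurable_fst measurable_segMap]
  exact Measure.map_id

lemma map_add_rise_restrict_slot (σ : Equiv.Perm ι) (v : ι → ℝ) (i : ι) :
    (volume.restrict (slot v i)).map (· + rise σ v i) =
      volume.restrict (slot (v ∘ σ.symm) (σ i)) := by
  have hpre : slot v i = (· + rise σ v i) ⁻¹' slot (v ∘ σ.symm) (σ i) :=
    Set.ext fun _ => add_rise_mem_slot_iff.symm
  rw [hpre]
  exact ((measurePreserving_add_right volume _).restrict_preimage measurableSet_Ico).map_eq

lemma snd_segMeasure (hv : ∀ i, 0 ≤ v i) :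
    (segMeasure σ v).snd = volume.restrict (Set.Ico 0 (∑ i, v i)) := by
  have hsnd (i : ι) : ((volume.restrict (slot v i)).map fun x => (x, x + rise σ v i)).snd =
      volume.restrict (slot (v ∘ σ.symm) (σ i)) := by
    rw [Measure.snd_map_prodMk (X := fun x => x) measurable_id, map_add_rise_restrict_slot]
  calc (segMeasure σ v).snd = ∑ i, volume.restrict (slot (v ∘ σ.symm) (σ i)) := by
        rw [segMeasure, ← Measure.sum_fintype, Measure.snd_sum, Measure.sum_fintype]
        exact Finset.sum_congr rfl fun i _ => hsnd i
    _ = ∑ i, volume.restrict (slot (v ∘ σ.symm) i) :=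
        Equiv.sum_comp σ fun i => volume.restrict (slot (v ∘ σ.symm) i)
    _ = volume.restrict (Set.Ico 0 (∑ i, v i)) := by
        rw [sum_restrict_slot (v := v ∘ σ.symm) fun i => hv _]
        simp only [Function.comp_apply, Equiv.sum_comp]

lemma segMap_snd_lt_iff (hv : ∀ i, 0 ≤ v i) {i j : ι} {x y : ℝ} (hx : x ∈ slot v i)
    (hy : y ∈ slot v j) (hxy : x < y) : (segMap σ v x).2 < (segMap σ v y).2 ↔ σ i ≤ σ j := by
  have hv' : ∀ i, 0 ≤ (v ∘ σ.symm) i := fun i => hv _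
  refine ⟨fun h => le_of_mem_slot hv' h.le (segMap_snd_mem_slot hv hx) (segMap_snd_mem_slot hv hy),
    fun h => ?_⟩
  rcases h.eq_or_lt with heq | hlt
  · obtain rfl := σ.injective heq
    rw [segMap_of_mem hv hx, segMap_of_mem hv hy]
    exact add_lt_add_left hxy _
  · exact lt_of_mem_slot hv' hlt (segMap_snd_mem_slot hv hx) (segMap_snd_mem_slot hv hy)

lemma segMap_snd_ne (hv : ∀ i, 0 ≤ v i) {i j : ι} {x y : ℝ} (hx : x ∈ slot v i)
    (hy : y ∈ slot v j) (hxy : x ≠ y) : (segMap σ v x).2 ≠ (segMap σ v y).2 := by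
  intro heq
  have hij : i = j := σ.injective <| eq_of_mem_slot (fun i => hv _) (segMap_snd_mem_slot hv hx)
    (heq ▸ segMap_snd_mem_slot hv hy)
  subst hij
  rw [segMap_of_mem hv hx, segMap_of_mem hv hy] at heq
  exact hxy (add_right_cancel heq)

variable {k : ℕ}

/-- The tuples of points that form the pattern `τ`, in order of their abscissae. -/
def patternSet (τ : Equiv.Perm (Fin k)) : Set (Fin k → ℝ × ℝ) :=
  {g | (∀ i j, i < j → (g i).1 < (g j).1) ∧ ∀ i j, (g i).2 < (g j).2 ↔ τ i < τ j}

lemma measurableSet_patternSet (τ : Equiv.Perm (Fin k)) : MeasurableSet (patternSet τ) := by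
  have hfst (i : Fin k) : Measurable fun g : Fin k → ℝ × ℝ => (g i).1 := by fun_prop
  have hsnd (i : Fin k) : Measurable fun g : Fin k → ℝ × ℝ => (g i).2 := by fun_prop
  refine measurableSet_setOfPred.mpr (.and (.forall fun i => .forall fun j => ?_)
    (.forall fun i => .forall fun j => ?_))
  · exact measurable_const.imp (measurableSet_lt (hfst i) (hfst j)).mem
  · exact (measurableSet_lt (hsnd i) (hsnd j)).mem.iff measurable_const

variable {τ : Equiv.Perm (Fin k)} {F : Fin k → ι}

lemma segMap_comp_mem_patternSet_iff (hv : ∀ i, 0 ≤ v i) {x : Fin k → ℝ}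
    (hx : ∀ a, x a ∈ slot v (F a)) :
    segMap σ v ∘ x ∈ patternSet τ ↔ IsPlacement τ σ F ∧ StrictMono x := by
  constructor
  · rintro ⟨hmono, hpat⟩
    refine ⟨⟨?_, fun a b hab => ?_⟩, hmono⟩
    · exact fun a b hab => le_of_mem_slot hv (StrictMono.monotone hmono hab) (hx a) (hx b)
    · exact (hpat a b).symm.trans (segMap_snd_lt_iff hv (hx a) (hx b) (hmono a b hab))
  · rintro ⟨hF, hmono⟩
    refine ⟨fun a b hab => hmono hab, lt_iff_lt_of_forall_lt (fun a b hab => ?_) τ.injective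
      fun a b hab => ?_⟩
    · by_contra hne
      exact segMap_snd_ne hv (hx a) (hx b) (hmono.injective.ne hne) hab
    · exact (segMap_snd_lt_iff hv (hx a) (hx b) (hmono hab)).trans (hF.lt_iff_le hab).symm

lemma preimage_patternSet_inter_pi (hv : ∀ i, 0 ≤ v i) :
    {x | segMap σ v ∘ x ∈ patternSet τ} ∩ Set.univ.pi (fun _ => Set.Ico 0 (∑ i, v i)) =
      ⋃ F : {F // IsPlacement τ σ F}, increasingIn (slot v) F.1 := by
  ext x
  rw [← iUnion_slot hv, Set.mem_iUnion]
  constructor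
  · rintro ⟨hpat, hbox⟩
    choose F hF using fun a => Set.mem_iUnion.mp (hbox a trivial)
    obtain ⟨hplace, hmono⟩ := (segMap_comp_mem_patternSet_iff hv hF).mp hpat
    exact ⟨⟨F, hplace⟩, hF, hmono⟩
  · rintro ⟨⟨F, hplace⟩, hF, hmono⟩
    exact ⟨(segMap_comp_mem_patternSet_iff hv hF).mpr ⟨hplace, hmono⟩,
      fun a _ => Set.mem_iUnion.mpr ⟨F a, hF a⟩⟩

lemma pairwise_disjoint_increasingIn_slot (hv : ∀ i, 0 ≤ v i) :
    Pairwise (Function.onFun Disjoint (increasingIn (k := k) (slot v))) := fun _ _ hne =>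
  Set.disjoint_left.mpr fun _ hx hx' =>
    hne (funext fun a => eq_of_mem_slot hv (hx.1 a) (hx'.1 a))

lemma pi_segMeasure_eq (hv : ∀ i, 0 ≤ v i) :
    Measure.pi (fun _ : Fin k => segMeasure σ v) =
      (volume.restrict (Set.univ.pi fun _ => Set.Ico 0 (∑ i, v i))).map (segMap σ v ∘ ·) := by
  rw [segMeasure_eq_map hv, ← Measure.pi_map_pi fun _ => measurable_segMap.aemeasurable,
    ← Measure.restrict_pi_pi]
  rfl

theorem pi_segMeasure_patternSet (hv : ∀ i, 0 ≤ v i) (τ : Equiv.Perm (Fin k)) :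
    (Measure.pi (fun _ => segMeasure σ v) (patternSet τ)).toReal =
      ∑' F : {F // IsPlacement τ σ F}, fiberWeight v F.1 := by
  have hmeas : Measurable (segMap σ v ∘ · : (Fin k → ℝ) → Fin k → ℝ × ℝ) :=
    measurable_pi_lambda _ fun a => measurable_segMap.comp (measurable_pi_apply a)
  have hsum : Measure.pi (fun _ => segMeasure σ v) (patternSet τ) =
      ∑' F : {F // IsPlacement τ σ F}, ENNReal.ofReal (fiberWeight v F.1) := by
    rw [pi_segMeasure_eq hv, Measure.map_apply hmeas (measurableSet_patternSet τ),
      Measure.restrict_apply (hmeas (measurableSet_patternSet τ))]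
    refine (congrArg volume (preimage_patternSet_inter_pi hv)).trans ?_
    rw [measure_iUnion]
    · exact tsum_congr fun F => volume_increasingIn_slot hv F.2.monotone
    · exact fun F F' hne => pairwise_disjoint_increasingIn_slot hv (Subtype.coe_ne_coe.mpr hne)
    · exact fun F => measurableSet_increasingIn (fun _ => measurableSet_Ico) F.1
  rw [hsum, ENNReal.tsum_toReal_eq fun _ => ENNReal.ofReal_ne_top]
  exact tsum_congr fun F => ENNReal.toReal_ofReal (fiberWeight_nonneg hv F.1)

end Segments

/-! ### The step-up permuton -/

section Permuton

lemma measure_preimage_Icc_of_map_eq {α : Type*} [MeasurableSpace α] {μ : Measure α} {f : α → ℝ}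
    (hf : Measurable f) (hmap : μ.map f = volume.restrict (Set.Ico 0 1)) {a b : ℝ} (ha : 0 ≤ a)
    (hb : b ≤ 1) : μ (f ⁻¹' Set.Icc a b) = ENNReal.ofReal (b - a) := by
  rw [← Measure.map_apply hf measurableSet_Icc, hmap, Measure.restrict_congr_set Ico_ae_eq_Icc,
    Measure.restrict_apply measurableSet_Icc, Set.inter_eq_left.mpr (Set.Icc_subset_Icc ha hb),
    Real.volume_Icc]

lemma ae_mem_Icc_of_map_eq {α : Type*} [MeasurableSpace α] {μ : Measure α} {f : α → ℝ}
    (hf : Measurable f) (hmap : μ.map f = volume.restrict (Set.Ico 0 1)) :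
    ∀ᵐ z ∂μ, f z ∈ Set.Icc (0 : ℝ) 1 := by
  refine ae_of_ae_map hf.aemeasurable ?_
  rw [hmap]
  exact ae_restrict_of_forall_mem measurableSet_Ico fun _ hx => Set.Ico_subset_Icc_self hx

/-- A measure on the plane whose marginals are uniform on the unit interval is a permuton. -/
def Permuton.ofMarginals (μ : Measure (ℝ × ℝ)) (hfst : μ.fst = volume.restrict (Set.Ico 0 1))
    (hsnd : μ.snd = volume.restrict (Set.Ico 0 1)) : Permuton where
  μ := μ
  prob := ⟨by
    rw [← Measure.fst_univ, hfst, Measure.restrict_apply_univ, Real.volume_Ico, sub_zero,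
      ENNReal.ofReal_one]⟩
  margX a b ha _ hb := by
    rw [← measure_preimage_Icc_of_map_eq measurable_fst hfst ha hb]
    refine measure_congr ?_
    filter_upwards [ae_mem_Icc_of_map_eq measurable_snd hsnd] with z hz
    exact propext (and_iff_left hz)
  margY a b ha _ hb := by
    rw [← measure_preimage_Icc_of_map_eq measurable_snd hsnd ha hb]
    refine measure_congr ?_
    filter_upwards [ae_mem_Icc_of_map_eq measurable_fst hfst] with z hz
    exact propext (and_iff_right hz)

end Permuton

section StepUp

variable {ι : Type*} [Fintype ι]

lemma sum_withTop {M : Type*} [AddCommMonoid M] (f : WithTop ι → M) :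
    ∑ i, f i = f ⊤ + ∑ i : ι, f i :=
  Fintype.sum_option f

/-- The lengths of the segments of the step-up permuton with weights `p`; the last segment, indexed
by `⊤`, covers what `p` leaves of the unit interval. -/
noncomputable def segLength (p : ι → ℝ) (i : WithTop ι) : ℝ := i.recTopCoe (1 - ∑ j, p j) p

lemma segLength_nonneg {p : ι → ℝ} (hp : ∀ i, 0 ≤ p i) (hsum : ∑ i, p i ≤ 1) (i : WithTop ι) :
    0 ≤ segLength p i := by
  cases i with
  | top => exact sub_nonneg.mpr hsum
  | coe i => exact hp i

lemma sum_segLength (p : ι → ℝ) : ∑ i, segLength p i = 1 :=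
  (sum_withTop _).trans (sub_add_cancel 1 (∑ i, p i))

variable [LinearOrder ι] {M : Type*} [AddCommMonoid M]

lemma leftEnd_coe (v : WithTop ι → M) (i : ι) : leftEnd v i = leftEnd (v ∘ (↑)) i := by
  simp only [leftEnd, Finset.sum_filter, sum_withTop, not_top_lt, if_false, zero_add,
    WithTop.coe_lt_coe, Function.comp_apply]

lemma leftEnd_top (v : WithTop ι → M) : leftEnd v ⊤ = ∑ i : ι, v i := by
  simp only [leftEnd, Finset.sum_filter, sum_withTop, lt_irrefl, if_false, zero_add,
    WithTop.coe_lt_top, if_true]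

lemma leftEnd_comp_symm (σ : Equiv.Perm ι) (v : ι → M) (i : ι) :
    leftEnd (v ∘ σ.symm) (σ i) = ∑ j with σ j < σ i, v j := by
  simp only [leftEnd, Finset.sum_filter]
  rw [← Equiv.sum_comp σ]
  simp only [Function.comp_apply, Equiv.symm_apply_apply]

lemma rise_segLength_coe (σ : Equiv.Perm ι) (p : ι → ℝ) (i : ι) :
    rise σ.withTopCongr (segLength p) i = rise σ p i := by
  refine congrArg₂ (· - ·) ?_ ?_
  · exact leftEnd_coe _ _
  · exact leftEnd_coe _ _

lemma rise_segLength_top (σ : Equiv.Perm ι) (p : ι → ℝ) :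
    rise σ.withTopCongr (segLength p) ⊤ = 0 := by
  refine sub_eq_zero.mpr ((leftEnd_top _).trans (Eq.trans ?_ (leftEnd_top _).symm))
  exact Equiv.sum_comp σ.symm p

lemma stepUp_eq_segMeasure {n : ℕ} (σ : Equiv.Perm (Fin n)) (p : Fin n → ℝ) :
    stepUp σ p = segMeasure σ.withTopCongr (segLength p) := by
  have htop : (volume.restrict (slot (segLength p) ⊤)).map
      (fun x => (x, x + rise σ.withTopCongr (segLength p) ⊤)) =
        (volume.restrict (Set.Icc (∑ j, p j) 1)).map fun x => (x, x) := by
    have hslot : slot (segLength p) ⊤ = Set.Ico (∑ j, p j) 1 :=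
      congrArg₂ Set.Ico (leftEnd_top _) <|
        (congrArg (· + _) (leftEnd_top _)).trans (add_sub_cancel (∑ j, p j) 1)
    simp only [hslot, rise_segLength_top, add_zero, Measure.restrict_congr_set Ico_ae_eq_Icc]
  have hcoe (i : Fin n) : (volume.restrict (slot (segLength p) i)).map
      (fun x => (x, x + rise σ.withTopCongr (segLength p) i)) =
        (volume.restrict (Set.Icc (segA p i) (segA p i + p i))).map
          fun x => (x, x - segA p i + segB σ p i) := by
    have hslot : slot (segLength p) i = Set.Ico (segA p i) (segA p i + p i) :=
      congrArg₂ Set.Ico (leftEnd_coe _ _) (congrArg (· + p i) (leftEnd_coe _ _))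
    have hrise (x : ℝ) : x + rise σ p i = x - segA p i + segB σ p i := by
      rw [rise, leftEnd_comp_symm, ← segB, show leftEnd p i = segA p i from rfl]
      ring
    simp only [hslot, rise_segLength_coe, hrise, Measure.restrict_congr_set Ico_ae_eq_Icc]
  refine Eq.symm ((sum_withTop _).trans ((add_comm _ _).trans ?_))
  exact congrArg₂ (· + ·) (Finset.sum_congr rfl fun i _ => hcoe i) htop

end StepUp

theorem pdens_stepUp_general {k n : ℕ} (hk : 2 ≤ k) (τ : Equiv.Perm (Fin k))
    (hτ : Indecomposable τ) (σ : Equiv.Perm (Fin n)) (p : Fin n → ℝ) (hp : ∀ i, 0 ≤ p i)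
    (hsum : ∑ i, p i ≤ 1) :
    ∃ P : Permuton, P.μ = stepUp σ p ∧
      pdens τ P = (k.factorial : ℝ) *
        ∑' (c : {c : Comp k // IsCompressive τ c}),
          ∑' (ψ : {ψ : Fin c.1.len → Fin n // IsOccQuot τ c.1 σ ψ}),
            ∏ i : Fin c.1.len,
              p (ψ.1 i) ^ (c.1.s i) / ((c.1.s i).factorial : ℝ) := by
  have hv := segLength_nonneg hp hsum
  let P := Permuton.ofMarginals (segMeasure σ.withTopCongr (segLength p))
    (by rw [fst_segMeasure hv, sum_segLength]) (by rw [snd_segMeasure hv, sum_segLength])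
  refine ⟨P, (stepUp_eq_segMeasure σ p).symm, congrArg ((k ! : ℝ) * ·) ?_⟩
  calc (Measure.pi (fun _ => segMeasure σ.withTopCongr (segLength p)) (patternSet τ)).toReal
    _ = ∑' F : {F // IsPlacement τ σ.withTopCongr F}, fiberWeight (segLength p) F.1 :=
      pi_segMeasure_patternSet hv τ
    _ = ∑' F : {F // IsPlacement τ σ F}, fiberWeight p F.1 :=
      tsum_isPlacement_withTopCongr hk hτ σ (segLength p)
    _ = _ := (tsum_tsum_isOccQuot p τ σ).symm

/-- **Observation (step-up permutons).** Let `τ` be a non-trivial indecomposable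
permutation of order `k`, `σ` a permutation of order `n ≥ k` and `p` positive
weights with `Σ p_i ≤ 1`.  Then the step-up permuton `Φ_σ^p` satisfies
`t(τ,Φ_σ^p) = k! Σ_{𝒫 ∈ R(τ)} Σ_{ψ ∈ Occ(τ/𝒫,σ)} Π_i p_{ψ(i)}^{|P_i|}/|P_i|!`,
the outer sum being over all `τ`-compressive partitions. -/
theorem pdens_stepUp {k n : ℕ} (hk : 2 ≤ k) (τ : Equiv.Perm (Fin k))
    (hτ : Indecomposable τ) (σ : Equiv.Perm (Fin n)) (hkn : k ≤ n)
    (p : Fin n → ℝ) (hp : ∀ i, 0 < p i) (hsum : ∑ i, p i ≤ 1) :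
    ∃ P : Permuton, P.μ = stepUp σ p ∧
      pdens τ P = (k.factorial : ℝ) *
        ∑' (c : {c : Comp k // IsCompressive τ c}),
          ∑' (ψ : {ψ : Fin c.1.len → Fin n // IsOccQuot τ c.1 σ ψ}),
            ∏ i : Fin c.1.len,
              p (ψ.1 i) ^ (c.1.s i) / ((c.1.s i).factorial : ℝ) := by
  exact pdens_stepUp_general hk τ hτ σ p (fun i => (hp i).le) hsum
end

section
/- Every sequence (σ_n)_{n∈ℕ} of permutations with |σ_n| → ∞ has a subsequence (σ_{n_j})_{j∈ℕ} that is convergent, i.e., such that for every permutation τ the sequence of densities t(τ,σ_{n_j}) converges as j → ∞. -/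
open Filter Topology

/-!
There are only countably many patterns and each density lies in `[0, 1]`, so the density profiles
`τ ↦ t(τ, σ_n)` form a sequence in a countable power of the unit interval. This product is compact
and first countable, hence sequentially compact, and its topology is that of pointwise convergence.
-/

theorem natCard_orderEmbedding_fin (k : ℕ) (α : Type*) [LinearOrder α] :
    Nat.card (Fin k ↪o α) = (Nat.card α).choose k :=
  (Nat.card_congr Set.powersetCard.ofFinEmbEquiv).trans (Set.powersetCard.card α k)

theorem lam_le_choose {k n : ℕ} (π : Equiv.Perm (Fin k)) (σ : Equiv.Perm (Fin n)) :
    lam π σ ≤ n.choose k := by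
  let toOrderEmb (f : {f : Fin k → Fin n // IsOcc π σ f}) : Fin k ↪o Fin n :=
    .ofStrictMono f.1 f.2.1
  have toOrderEmb_injective : Function.Injective toOrderEmb := fun _ _ h =>
    Subtype.ext (congrArg DFunLike.coe h)
  calc
    lam π σ ≤ Nat.card (Fin k ↪o Fin n) :=
      Nat.card_le_card_of_injective toOrderEmb toOrderEmb_injective
    _ = n.choose k := by rw [natCard_orderEmbedding_fin, Nat.card_fin]

theorem dens_mem_Icc {k n : ℕ} (π : Equiv.Perm (Fin k)) (σ : Equiv.Perm (Fin n)) :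
    dens π σ ∈ Set.Icc (0 : ℝ) 1 := by
  unfold dens
  split_ifs
  · have hle : (lam π σ : ℝ) ≤ n.choose k := mod_cast lam_le_choose π σ
    exact ⟨by positivity, div_le_one_of_le₀ hle (by positivity)⟩
  · exact unitInterval.zero_mem

theorem exists_subseq_forall_tendsto {ι : Type*} [Countable ι] {X : ι → Type*}
    [∀ i, TopologicalSpace (X i)] [∀ i, FirstCountableTopology (X i)] {K : ∀ i, Set (X i)}
    (hK : ∀ i, IsCompact (K i)) {u : ℕ → ∀ i, X i} (hu : ∀ n i, u n i ∈ K i) :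
    ∃ φ : ℕ → ℕ, StrictMono φ ∧
      ∀ i, ∃ a ∈ K i, Tendsto (fun j => u (φ j) i) atTop (𝓝 a) := by
  obtain ⟨a, ha, φ, hφ, hlim⟩ :=
    (isCompact_univ_pi hK).tendsto_subseq fun n => Set.mem_univ_pi.2 (hu n)
  exact ⟨φ, hφ, fun i => ⟨a i, ha i (Set.mem_univ i), tendsto_pi_nhds.1 hlim i⟩⟩

theorem exists_convergent_subsequence_general (σs : ℕ → Perms) :
    ∃ φ : ℕ → ℕ, StrictMono φ ∧
      ∀ τ : Perms, ∃ L : ℝ,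
        Tendsto (fun j => subDens τ (σs (φ j))) atTop (𝓝 L) := by
  obtain ⟨φ, hφ, hlim⟩ := exists_subseq_forall_tendsto
    (fun _ : Perms => isCompact_Icc) fun n τ => dens_mem_Icc τ.2 (σs n).2
  exact ⟨φ, hφ, fun τ => (hlim τ).imp fun _ => And.right⟩

/-- Every sequence of permutations whose orders tend to infinity has a convergent
subsequence: one along which every subpermutation density converges. -/
theorem exists_convergent_subsequence (σs : ℕ → Perms)
    (horder : Tendsto (fun n => (σs n).1) atTop atTop) :
    ∃ φ : ℕ → ℕ, StrictMono φ ∧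
      ∀ τ : Perms, ∃ L : ℝ,
        Tendsto (fun j => subDens τ (σs (φ j))) atTop (𝓝 L) :=
  exists_convergent_subsequence_general σs
end
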